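/- arXiv:2601.03208 — 8 statements merged into one kernel-verified Lean document; each statement's English description precedes it below -/
import Mathlib

section
/- Let I be a monomial ideal of R = K[x_1,…,x_n] of height at least 2. Then v(sgn(I)) ≤ v(I), where v denotes the v-number. -/
open MvPolynomial

/-- The monomial ideal of `R = K[x_1,…,x_n]` generated by the monomials `x^{v j}`,
`j = 1, …, q`, with exponent vectors `v j ∈ ℕ^n`. -/
noncomputable def monIdeal (K : Type) [Field K] {n q : ℕ} (v : Fin q → Fin n →₀ ℕ) :
    Ideal (MvPolynomial (Fin n) K) :=
  Ideal.span (Set.range fun j => monomial (v j) (1 : K))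

/-- The exponent vectors `v j` are pairwise non-comparable in the componentwise order,
i.e. the corresponding monomials form an anti-chain under divisibility.  Equivalently,
`{x^{v j}}` is the (unique) minimal monomial generating set `G(I)` of the monomial ideal
`I` it generates. -/
def AntichainFam {n q : ℕ} (v : Fin q → Fin n →₀ ℕ) : Prop :=
  ∀ j k : Fin q, v j ≤ v k → j = k

/-- The signature of the family `v` of exponent vectors (the columns of the incidence
matrix `A`): for each row `i`, the `(i,j)` entry of the signature matrix is the position
of `A i j = v j i` in the ascending list of the distinct entries of the `i`-th row of `A`,
i.e. the number of distinct values in row `i` that are strictly smaller than `v j i`.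
The columns of the resulting matrix are the exponent vectors of the generators of the
signature ideal `sgn(I) = monIdeal K (sgnExp v)`. -/
noncomputable def sgnExp {n q : ℕ} (v : Fin q → Fin n →₀ ℕ) : Fin q → Fin n →₀ ℕ :=
  fun j => Finsupp.equivFunOnFinite.symm fun i =>
    ((Finset.univ.image fun k : Fin q => v k i).filter fun m => m < v j i).card

/-- The height (codimension) of an ideal: the infimum of the heights of the prime ideals
containing it, where the height of a prime is the supremum of the lengths of chains of
primes descending from it. -/
noncomputable def heightOf {R : Type*} [CommRing R] (I : Ideal R) : ℕ∞ :=
  ⨅ p ∈ { p : PrimeSpectrum R | I ≤ p.asIdeal }, Order.height p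

/-- The v-number of a monomial ideal `I`:
`v(I) = min { d ≥ 0 : ∃ monomial x^a of degree d with (I : x^a) ∈ Ass(R/I) }`. -/
noncomputable def vNumber (K : Type) [Field K] (n : ℕ)
    (I : Ideal (MvPolynomial (Fin n) K)) : ℕ :=
  sInf { d : ℕ | ∃ a : Fin n →₀ ℕ, (∑ i, a i) = d ∧
    Submodule.colon I (Ideal.span {(monomial a (1 : K) : MvPolynomial (Fin n) K)}) ∈
      associatedPrimes (MvPolynomial (Fin n) K) (MvPolynomial (Fin n) K ⧸ I) }


theorem aux_mem_monIdeal (K : Type) [Field K] {n q : ℕ} (v : Fin q → Fin n →₀ ℕ)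
    (f : MvPolynomial (Fin n) K) :
    f ∈ monIdeal K v ↔ ∀ c ∈ f.support, ∃ j, v j ≤ c := by
  have h := @mem_ideal_span_monomial_image (Fin n) K _ f (Set.range v)
  rw [← Set.range_comp] at h
  unfold monIdeal
  rw [show (fun j => monomial (v j) (1 : K)) = (fun s => monomial s (1 : K)) ∘ v from rfl, h]
  simp

theorem aux_mem_colon (K : Type) [Field K] {n q : ℕ} (v : Fin q → Fin n →₀ ℕ)
    (a : Fin n →₀ ℕ) (f : MvPolynomial (Fin n) K) :
    f ∈ Submodule.colon (monIdeal K v)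
      (Ideal.span {(monomial a (1 : K) : MvPolynomial (Fin n) K)}) ↔
      ∀ c ∈ f.support, ∃ j, v j ≤ a + c := by
  rw [Ideal.mem_colon_span_singleton, aux_mem_monIdeal]
  constructor
  · intro h c hc
    apply h
    rw [mem_support_iff] at hc ⊢
    rw [add_comm, coeff_mul_monomial]
    simpa using hc
  · intro h c hc
    rw [mem_support_iff, coeff_mul_monomial'] at hc
    split_ifs at hc with hac
    · have := h (c - a) (by rw [mem_support_iff]; simpa using hc)
      rwa [add_tsub_cancel_of_le hac] at this
    · exact absurd rfl hc

theorem aux_monomial_mem_colon (K : Type) [Field K] {n q : ℕ} (v : Fin q → Fin n →₀ ℕ)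
    (a c : Fin n →₀ ℕ) :
    (monomial c (1 : K)) ∈ Submodule.colon (monIdeal K v)
      (Ideal.span {(monomial a (1 : K) : MvPolynomial (Fin n) K)}) ↔
      ∃ j, v j ≤ a + c := by
  classical
  rw [aux_mem_colon, support_monomial]
  simp

theorem aux_prime_var (K : Type) [Field K] {n : ℕ} (P : Ideal (MvPolynomial (Fin n) K))
    [hP : P.IsPrime] (c : Fin n →₀ ℕ) (h : monomial c (1 : K) ∈ P) :
    ∃ i, c i ≠ 0 ∧ monomial (Finsupp.single i 1) (1 : K) ∈ P := by
  rw [monomial_eq, C_1, one_mul, Finsupp.prod, hP.prod_mem_iff] at h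
  obtain ⟨i, hi, h⟩ := h
  exact ⟨i, by simpa using hi, hP.mem_of_pow_mem _ h⟩

/-- transfer of prime colon ideals -/
theorem aux_transfer (K : Type) [Field K] {n q : ℕ} (v w : Fin q → Fin n →₀ ℕ)
    (a b : Fin n →₀ ℕ)
    (h1 : ∀ i j, v j i ≤ a i ↔ w j i ≤ b i)
    (h2 : ∀ i j, v j i = a i + 1 → w j i = b i + 1)
    (hP : (Submodule.colon (monIdeal K v)
      (Ideal.span {(monomial a (1 : K) : MvPolynomial (Fin n) K)})).IsPrime) :
    Submodule.colon (monIdeal K w)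
      (Ideal.span {(monomial b (1 : K) : MvPolynomial (Fin n) K)}) =
    Submodule.colon (monIdeal K v)
      (Ideal.span {(monomial a (1 : K) : MvPolynomial (Fin n) K)}) := by
  have key : ∀ c : Fin n →₀ ℕ, (∃ j, w j ≤ b + c) ↔ ∃ j, v j ≤ a + c := by
    intro c
    constructor
    · rintro ⟨j, hj⟩
      rw [← aux_monomial_mem_colon K]
      refine hP.mem_of_pow_mem (∑ i, v j i) ?_
      rw [monomial_pow, one_pow, aux_monomial_mem_colon]
      refine ⟨j, fun i => ?_⟩
      have hi := hj i
      simp only [Finsupp.add_apply, Finsupp.smul_apply, smul_eq_mul] at hi ⊢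
      by_cases hc : c i = 0
      · rw [hc] at hi ⊢
        simpa using (h1 i j).2 (by simpa using hi)
      · have : v j i ≤ ∑ i, v j i :=
          Finset.single_le_sum (f := fun i => v j i) (fun _ _ => Nat.zero_le _) (Finset.mem_univ i)
        nlinarith [Nat.pos_of_ne_zero hc]
    · intro h
      rw [← aux_monomial_mem_colon K] at h
      obtain ⟨i, hi, hx⟩ := aux_prime_var K _ c h
      rw [aux_monomial_mem_colon] at hx
      obtain ⟨j, hj⟩ := hx
      refine ⟨j, fun k => ?_⟩
      have hk := hj k
      simp only [Finsupp.add_apply] at hk ⊢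
      by_cases hik : i = k
      · subst hik
        simp only [Finsupp.single_eq_same] at hk
        rcases Nat.lt_or_ge (a i) (v j i) with hl | hl
        · have := h2 i j (by omega)
          omega
        · have := (h1 i j).1 hl
          omega
      · rw [Finsupp.single_apply, if_neg hik] at hk
        have := (h1 k j).1 hk
        omega
  ext f
  rw [aux_mem_colon, aux_mem_colon]
  simp only [key]

theorem aux_mem_ass (K : Type) [Field K] {n q : ℕ} (v : Fin q → Fin n →₀ ℕ)
    (a : Fin n →₀ ℕ) :
    Submodule.colon (monIdeal K v)
      (Ideal.span {(monomial a (1 : K) : MvPolynomial (Fin n) K)}) ∈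
      associatedPrimes (MvPolynomial (Fin n) K) (MvPolynomial (Fin n) K ⧸ monIdeal K v) ↔
    (Submodule.colon (monIdeal K v)
      (Ideal.span {(monomial a (1 : K) : MvPolynomial (Fin n) K)})).IsPrime := by
  constructor
  · intro h
    exact IsAssociatedPrime.isPrime h
  · intro h
    refine ⟨h, Ideal.Quotient.mk _ (monomial a 1), ?_⟩
    have : Submodule.colon (⊥ : Submodule (MvPolynomial (Fin n) K)
        (MvPolynomial (Fin n) K ⧸ monIdeal K v))
        {Ideal.Quotient.mk (monIdeal K v) (monomial a 1)} = Submodule.colon (monIdeal K v)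
      (Ideal.span {(monomial a (1 : K) : MvPolynomial (Fin n) K)}) := by
      ext f
      rw [Submodule.mem_colon_singleton, Ideal.mem_colon_span_singleton, Submodule.mem_bot,
        ← Ideal.Quotient.eq_zero_iff_mem]
      rfl
    rw [this, h.radical]

theorem aux_sgn_lt {n q : ℕ} (v : Fin q → Fin n →₀ ℕ) (j k : Fin q) (i : Fin n)
    (h : v j i < v k i) : sgnExp v j i < sgnExp v k i := by
  unfold sgnExp
  simp only [Finsupp.equivFunOnFinite_symm_apply_apply]
  apply Finset.card_lt_card
  rw [Finset.ssubset_iff_of_subset]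
  · exact ⟨v j i, by simp [h], by simp⟩
  · intro m hm
    rw [Finset.mem_filter] at hm ⊢
    exact ⟨hm.1, hm.2.trans h⟩

theorem aux_sgn_le {n q : ℕ} (v : Fin q → Fin n →₀ ℕ) (j k : Fin q) (i : Fin n)
    (h : v j i ≤ v k i) : sgnExp v j i ≤ sgnExp v k i := by
  unfold sgnExp
  simp only [Finsupp.equivFunOnFinite_symm_apply_apply]
  apply Finset.card_le_card
  intro m hm
  rw [Finset.mem_filter] at hm ⊢
  exact ⟨hm.1, hm.2.trans_le h⟩

theorem aux_row_zero (K : Type) [Field K] (n q : ℕ) (v : Fin q → Fin n →₀ ℕ)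
    (hht : (2 : ℕ∞) ≤ heightOf (monIdeal K v)) (i : Fin n) : ∃ j, v j i = 0 := by
  by_contra! hcon
  have hpr : (Ideal.span {(X i : MvPolynomial (Fin n) K)}).IsPrime := by
    rw [Ideal.span_singleton_prime (X_ne_zero i)]
    exact X_prime
  have hle : monIdeal K v ≤ Ideal.span {(X i : MvPolynomial (Fin n) K)} := by
    unfold monIdeal
    rw [Ideal.span_le]
    rintro _ ⟨j, rfl⟩
    simp only [SetLike.mem_coe, Ideal.mem_span_singleton]
    rw [X_dvd_monomial]
    exact Or.inr (hcon j)
  have h1 : heightOf (monIdeal K v) ≤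
      Order.height (⟨_, hpr⟩ : PrimeSpectrum (MvPolynomial (Fin n) K)) :=
    iInf₂_le (f := fun (p : PrimeSpectrum (MvPolynomial (Fin n) K))
      (_ : p ∈ { p : PrimeSpectrum (MvPolynomial (Fin n) K) | monIdeal K v ≤ p.asIdeal }) =>
      Order.height p) ⟨_, hpr⟩ hle
  have h2 := Ideal.height_le_one_of_isPrincipal_of_mem_minimalPrimes
    (Ideal.span {(X i : MvPolynomial (Fin n) K)}) (Ideal.span {(X i : MvPolynomial (Fin n) K)})
    (by rw [Ideal.minimalPrimes_eq_subsingleton_self]; rfl)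
  have h3 : (Ideal.span {(X i : MvPolynomial (Fin n) K)}).height =
    Order.height (⟨_, hpr⟩ : PrimeSpectrum (MvPolynomial (Fin n) K)) := by
    exact PrimeSpectrum.height_eq_orderHeight ⟨_, hpr⟩
  rw [h3] at h2
  have := (hht.trans h1).trans h2
  norm_num at this

/-- forward row function -/
theorem aux_fwd {n q : ℕ} (v : Fin q → Fin n →₀ ℕ) (i : Fin n) (h0 : ∃ j, v j i = 0) (m : ℕ) :
    ∃ b ≤ m, (∀ j, v j i ≤ m ↔ sgnExp v j i ≤ b) ∧
      (∀ j, v j i = m + 1 → sgnExp v j i = b + 1) := by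
  obtain ⟨j0, h0⟩ := h0
  set S := Finset.univ.image fun k : Fin q => v k i with hS
  have h0S : 0 ∈ S := by rw [hS, Finset.mem_image]; exact ⟨j0, Finset.mem_univ _, h0⟩
  have hpos : 0 < (S.filter fun x => x < m + 1).card :=
    Finset.card_pos.2 ⟨0, by simp [h0S]⟩
  have hle : (S.filter fun x => x < m + 1).card ≤ m + 1 := by
    calc _ ≤ (Finset.range (m+1)).card := Finset.card_le_card (fun x hx => by
          rw [Finset.mem_filter] at hx; simpa using hx.2)
      _ = m + 1 := by simp
  have hsg : ∀ j, sgnExp v j i = (S.filter fun x => x < v j i).card := fun j => by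
    simp [sgnExp, hS]
  refine ⟨(S.filter fun x => x < m + 1).card - 1, by omega, fun j => ?_, fun j hj => ?_⟩
  · rw [hsg]
    have hvS : v j i ∈ S := by rw [hS, Finset.mem_image]; exact ⟨j, Finset.mem_univ _, rfl⟩
    constructor
    · intro h
      have : (S.filter fun x => x < v j i).card < (S.filter fun x => x < m + 1).card := by
        apply Finset.card_lt_card
        rw [Finset.ssubset_iff_of_subset]
        · exact ⟨v j i, by simp [hvS]; omega, by simp⟩
        · intro x hx
          rw [Finset.mem_filter] at hx ⊢
          exact ⟨hx.1, by omega⟩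
      omega
    · intro h
      by_contra! hlt
      have : (S.filter fun x => x < m + 1).card ≤ (S.filter fun x => x < v j i).card := by
        apply Finset.card_le_card
        intro x hx
        rw [Finset.mem_filter] at hx ⊢
        exact ⟨hx.1, by omega⟩
      omega
  · rw [hsg, hj]; omega

/-- backward row function -/
theorem aux_bwd {n q : ℕ} (v : Fin q → Fin n →₀ ℕ) (i : Fin n) (b : ℕ) :
    ∃ a, (∀ j, sgnExp v j i ≤ b ↔ v j i ≤ a) ∧
      (∀ j, sgnExp v j i = b + 1 → v j i = a + 1) := by
  by_cases hk : ∃ k, b < sgnExp v k i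
  · obtain ⟨k, hk, hmin⟩ := Finset.exists_min_image
      (Finset.univ.filter fun k => b < sgnExp v k i) (fun k => v k i)
      (by obtain ⟨k, hk⟩ := hk; exact ⟨k, by simp [hk]⟩)
    simp only [Finset.mem_filter, Finset.mem_univ, true_and] at hk hmin
    have hpos : 0 < v k i := by
      by_contra! h
      have h : v k i = 0 := by omega
      simp [sgnExp, h] at hk
    refine ⟨v k i - 1, fun j => ⟨fun h => ?_, fun h => ?_⟩, fun j hj => ?_⟩
    · by_contra! hc
      have := aux_sgn_le v k j i (by omega)
      omega
    · by_contra! hc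
      have := hmin j hc
      omega
    · have h1 := hmin j (by omega)
      have h2 : v j i ≤ v k i := by
        by_contra! hc
        have := aux_sgn_lt v k j i hc
        omega
      omega
  · push Not at hk
    refine ⟨∑ j, v j i, fun j => ⟨fun _ => ?_, fun _ => hk j⟩, fun j hj => ?_⟩
    · exact Finset.single_le_sum (f := fun j => v j i) (fun _ _ => Nat.zero_le _) (Finset.mem_univ j)
    · have := hk j
      omega

/-- **Signature invariants of monomial ideals** (Theorem: v-number).
Let `I` be a monomial ideal of `R = K[x_1,…,x_n]` of height at least `2`, with minimal
monomial generating set `G(I) = {x^{v_1},…,x^{v_q}}`.  Then `v(sgn(I)) ≤ v(I)`. -/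
theorem vnumber_sgn_le_vnumber (K : Type) [Field K] (n q : ℕ)
    (v : Fin q → Fin n →₀ ℕ) (hv : AntichainFam v)
    (I : Ideal (MvPolynomial (Fin n) K)) (hI : I = monIdeal K v)
    (hht : (2 : ℕ∞) ≤ heightOf I) :
    vNumber K n (monIdeal K (sgnExp v)) ≤ vNumber K n I := by
  subst hI
  have h0 := aux_row_zero K n q v hht
  unfold vNumber
  simp only [aux_mem_ass]
  rcases Set.eq_empty_or_nonempty { d : ℕ | ∃ a : Fin n →₀ ℕ, (∑ i, a i) = d ∧
    (Submodule.colon (monIdeal K v)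
      (Ideal.span {(monomial a (1 : K) : MvPolynomial (Fin n) K)})).IsPrime } with he | hne
  · rcases Set.eq_empty_or_nonempty { d : ℕ | ∃ a : Fin n →₀ ℕ, (∑ i, a i) = d ∧
      (Submodule.colon (monIdeal K (sgnExp v))
        (Ideal.span {(monomial a (1 : K) : MvPolynomial (Fin n) K)})).IsPrime } with he' | hne'
    · rw [he, he']
    · exfalso
      obtain ⟨d, b, -, hb⟩ := hne'
      choose a ha using fun i => aux_bwd v i (b i)
      have := aux_transfer K (sgnExp v) v b (Finsupp.equivFunOnFinite.symm a)
        (fun i => (ha i).1) (fun i => (ha i).2) hb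
      rw [← this] at hb
      have hm : (∑ i, (Finsupp.equivFunOnFinite.symm a) i) ∈ { d : ℕ | ∃ a : Fin n →₀ ℕ,
        (∑ i, a i) = d ∧ (Submodule.colon (monIdeal K v)
          (Ideal.span {(monomial a (1 : K) : MvPolynomial (Fin n) K)})).IsPrime } :=
        ⟨_, rfl, hb⟩
      rw [he] at hm
      exact hm
  · obtain ⟨a, had, ha⟩ := Nat.sInf_mem hne
    rw [← had]
    choose b hb using fun i => aux_fwd v i (h0 i) (a i)
    have := aux_transfer K v (sgnExp v) a (Finsupp.equivFunOnFinite.symm b)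
      (fun i => (hb i).2.1) (fun i => (hb i).2.2) ha
    rw [← this] at ha
    refine le_trans (Nat.sInf_le (m := ∑ i, (Finsupp.equivFunOnFinite.symm b) i) ?_)
      (b := ∑ i, (Finsupp.equivFunOnFinite.symm b) i) ?_
    · exact ⟨Finsupp.equivFunOnFinite.symm b, rfl, ha⟩
    exact Finset.sum_le_sum fun i _ => (hb i).1
end

section
/- Let I be a monomial ideal of R = K[x_1,…,x_n] of height at least 2. Then I is unmixed if and only if sgn(I) is unmixed. -/
open MvPolynomial

theorem mem_monIdeal {K : Type} [Field K] {n q : ℕ} (v : Fin q → Fin n →₀ ℕ)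
    (f : MvPolynomial (Fin n) K) :
    f ∈ monIdeal K v ↔ ∀ m ∈ f.support, ∃ j, v j ≤ m := by
  have h := mem_ideal_span_monomial_image (x := f) (s := Set.range v)
  rw [← Set.range_comp] at h
  simpa [monIdeal, Function.comp_def] using h

theorem monomial_mem_monIdeal {K : Type} [Field K] {n q : ℕ} (v : Fin q → Fin n →₀ ℕ)
    (m : Fin n →₀ ℕ) :
    monomial m (1 : K) ∈ monIdeal K v ↔ ∃ j, v j ≤ m := by
  classical
  rw [mem_monIdeal]
  simp [support_monomial]

theorem mem_ass_iff {R : Type} [CommRing R] [IsNoetherianRing R] (I p : Ideal R) :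
    p ∈ associatedPrimes R (R ⧸ I) ↔ p.IsPrime ∧ ∃ f : R, ∀ g, g ∈ p ↔ g * f ∈ I := by
  rw [AssociatedPrimes.mem_iff, isAssociatedPrime_iff]
  refine and_congr_right fun _ => ?_
  have key : ∀ f g : R, g ∈ (⊥ : Submodule R (R ⧸ I)).colon {Ideal.Quotient.mk I f} ↔
      g * f ∈ I := by
    intro f g
    rw [Submodule.mem_colon_singleton, Submodule.mem_bot, ← Ideal.Quotient.eq_zero_iff_mem,
      map_mul]
    rfl
  constructor
  · rintro ⟨x, hx⟩
    obtain ⟨f, rfl⟩ := Ideal.Quotient.mk_surjective x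
    exact ⟨f, fun g => by rw [hx, key]⟩
  · rintro ⟨f, hf⟩
    exact ⟨Ideal.Quotient.mk I f, by ext g; rw [hf, key]⟩

theorem support_sub_term {K : Type} [Field K] {n : ℕ} (f : MvPolynomial (Fin n) K)
    (a : Fin n →₀ ℕ) : (f - monomial a (f.coeff a)).support = f.support.erase a := by
  classical
  ext m
  simp only [mem_support_iff, coeff_sub, coeff_monomial, Finset.mem_erase]
  by_cases h : a = m
  · simp [h]
  · simp [h, Ne.symm h]

/-- Associated primes of monomial ideals. -/
theorem ass_monomial {K : Type} [Field K] {n q : ℕ} (v : Fin q → Fin n →₀ ℕ)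
    (p : Ideal (MvPolynomial (Fin n) K)) (hp : p.IsPrime)
    (h : ∃ f, ∀ g, g ∈ p ↔ g * f ∈ monIdeal K v) :
    (∀ g ∈ p, ∀ m ∈ g.support, monomial m (1 : K) ∈ p) ∧
    ∃ a : Fin n →₀ ℕ, ∀ m, monomial m (1 : K) ∈ p ↔ ∃ j, v j ≤ m + a := by
  classical
  have hex : ∃ N : ℕ, ∃ f, (∀ g, g ∈ p ↔ g * f ∈ monIdeal K v) ∧ f.support.card = N := by
    obtain ⟨f, hf⟩ := h
    exact ⟨_, f, hf, rfl⟩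
  obtain ⟨f, hf, hN⟩ := Nat.find_spec hex
  have hmin : ∀ f', (∀ g, g ∈ p ↔ g * f' ∈ monIdeal K v) → f.support.card ≤ f'.support.card := by
    intro f' hf'
    rw [hN]
    exact Nat.find_min' hex ⟨f', hf', rfl⟩
  have hfI : f ∉ monIdeal K v := by
    intro hfI
    exact hp.one_notMem ((hf 1).2 (by simpa using hfI))
  have hf0 : f ≠ 0 := by rintro rfl; exact hfI (Ideal.zero_mem _)
  have key : ∀ a ∈ f.support, ∀ m, (∃ j, v j ≤ m + a) → monomial m (1 : K) ∈ p := by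
    intro a ha m hm
    by_contra hmp
    have hmI : monomial m (1 : K) * monomial a (f.coeff a) ∈ monIdeal K v := by
      have : monomial m (1 : K) * monomial a (f.coeff a) =
          C (f.coeff a) * monomial (m + a) (1 : K) := by
        rw [monomial_mul, C_mul_monomial, one_mul, mul_one]
      rw [this]
      exact Ideal.mul_mem_left _ _ ((monomial_mem_monIdeal v _).2 hm)
    have := hmin (monomial m 1 * (f - monomial a (f.coeff a))) (by
      intro g
      have e : g * (monomial m (1 : K) * (f - monomial a (f.coeff a))) =
        (g * monomial m 1) * f - g * (monomial m (1 : K) * monomial a (f.coeff a)) := by ring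
      rw [e, sub_eq_add_neg, Ideal.add_mem_iff_left _ (neg_mem (Ideal.mul_mem_left _ _ hmI)), ← hf]
      constructor
      · exact fun h => Ideal.mul_mem_right _ _ h
      · intro h
        exact (hp.mem_or_mem h).resolve_right hmp)
    have h2 : (monomial m (1 : K) * (f - monomial a (f.coeff a))).support.card ≤
        (f.support.erase a).card := by
      refine (Finset.card_le_card (support_mul _ _)).trans ?_
      refine Finset.card_add_le.trans ?_
      rw [support_sub_term, support_monomial, if_neg one_ne_zero]
      simp
    have h3 := Finset.card_erase_lt_of_mem ha
    omega
  have conv : ∀ a ∈ f.support, ∀ m, monomial m (1 : K) ∈ p → ∃ j, v j ≤ m + a := by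
    intro a ha m hm
    refine (mem_monIdeal v _).1 ((hf _).1 hm) (m + a) ?_
    rw [mem_support_iff, coeff_monomial_mul, one_mul]
    exact mem_support_iff.1 ha
  constructor
  · have : ∀ N : ℕ, ∀ g ∈ p, g.support.card = N → ∀ m ∈ g.support, monomial m (1 : K) ∈ p := by
      intro N
      induction N using Nat.strong_induction_on with
      | _ N ih =>
        intro g hg hN m hm
        have hg0 : g ≠ 0 := by rintro rfl; simp at hm
        let o : MonomialOrder (Fin n) := MonomialOrder.lex
        have hd : monomial (o.degree g) (1 : K) ∈ p := by
          refine key (o.degree f) (o.degree_mem_support hf0) _ ?_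
          rw [← o.degree_mul hg0 hf0]
          exact (mem_monIdeal v _).1 ((hf g).1 hg) _ (o.degree_mem_support (mul_ne_zero hg0 hf0))
        by_cases hmd : m = o.degree g
        · rw [hmd]; exact hd
        · have hs := support_sub_term g (o.degree g)
          refine ih _ ?_ (g - monomial (o.degree g) (g.coeff (o.degree g))) ?_ rfl m ?_
          · rw [hs, ← hN]
            exact Finset.card_erase_lt_of_mem (o.degree_mem_support hg0)
          · refine Ideal.sub_mem _ hg ?_
            have : monomial (o.degree g) (g.coeff (o.degree g)) =
              C (g.coeff (o.degree g)) * monomial (o.degree g) (1 : K) := by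
              rw [C_mul_monomial, mul_one]
            rw [this]
            exact Ideal.mul_mem_left _ _ hd
          · rw [hs]; exact Finset.mem_erase.2 ⟨hmd, hm⟩
    exact fun g hg m hm => this _ g hg rfl m hm
  · obtain ⟨a, ha⟩ := support_nonempty.2 hf0
    exact ⟨a, fun m => ⟨conv a ha m, key a ha m⟩⟩

theorem monomial_mem_prime {K : Type} [Field K] {n : ℕ} (p : Ideal (MvPolynomial (Fin n) K))
    (hp : p.IsPrime) (m : Fin n →₀ ℕ) :
    monomial m (1 : K) ∈ p ↔ ∃ i, X i ∈ p ∧ m i ≠ 0 := by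
  rw [monomial_eq, C_1, one_mul, Finsupp.prod, hp.prod_mem_iff]
  constructor
  · rintro ⟨i, hi, h⟩
    exact ⟨i, hp.mem_of_pow_mem _ h, Finsupp.mem_support_iff.1 hi⟩
  · rintro ⟨i, hi, h⟩
    exact ⟨i, Finsupp.mem_support_iff.2 h, Ideal.pow_mem_of_mem _ hi _ (Nat.pos_of_ne_zero h)⟩

/-- The two families have the same row orders and zeros. -/
def OrdEq {n q : ℕ} (v w : Fin q → Fin n →₀ ℕ) : Prop :=
  (∀ i j k, v j i < v k i ↔ w j i < w k i) ∧ ∀ i j, v j i = 0 ↔ w j i = 0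

theorem OrdEq.symm {n q : ℕ} {v w : Fin q → Fin n →₀ ℕ} (h : OrdEq v w) : OrdEq w v :=
  ⟨fun i j k => (h.1 i j k).symm, fun i j => (h.2 i j).symm⟩

theorem comb {n q : ℕ} {v w : Fin q → Fin n →₀ ℕ} (h : OrdEq v w) (S : Set (Fin n))
    (a : Fin n →₀ ℕ) (ha : ∀ m : Fin n →₀ ℕ, (∃ i, i ∈ S ∧ m i ≠ 0) ↔ ∃ j, v j ≤ m + a) :
    ∃ b : Fin n →₀ ℕ, ∀ m : Fin n →₀ ℕ, (∃ i, i ∈ S ∧ m i ≠ 0) ↔ ∃ j, w j ≤ m + b := by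
  classical
  have hno : ∀ j, ¬ v j ≤ a := by
    intro j hj
    obtain ⟨i, -, hi⟩ := (ha 0).2 ⟨j, by simpa using hj⟩
    simp at hi
  have h1 : ∀ i : S, ∃ j, v j ≤ Finsupp.single i.1 1 + a := fun i =>
    (ha _).1 ⟨i.1, i.2, by simp⟩
  choose J hJ using h1
  have hJk : ∀ (i : S) (k : Fin n), k ≠ i.1 → v (J i) k ≤ a k := by
    intro i k hk
    have := hJ i k
    simpa [Finsupp.single_apply, hk.symm] using this
  have hJi : ∀ i : S, v (J i) i.1 = a i.1 + 1 := by
    intro i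
    have h2 := hJ i i.1
    simp at h2
    by_contra h3
    refine hno (J i) fun k => ?_
    by_cases hk : k = i.1
    · subst hk; omega
    · exact hJk i k hk
  refine ⟨Finsupp.equivFunOnFinite.symm fun k =>
    if hk : k ∈ S then w (J ⟨k, hk⟩) k - 1 else ∑ j, w j k, fun m => ⟨?_, ?_⟩⟩
  · rintro ⟨i, hi, hmi⟩
    refine ⟨J ⟨i, hi⟩, fun k => ?_⟩
    simp only [Finsupp.add_apply, Finsupp.equivFunOnFinite_symm_apply_apply]
    split_ifs with hk
    · by_cases hki : k = i
      · subst hki; omega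
      · have h3 := hJk ⟨i, hi⟩ k hki
        have h4 := hJi ⟨k, hk⟩
        have h5 := (h.1 k (J ⟨i, hi⟩) (J ⟨k, hk⟩)).1 (by simp only at h4; omega)
        omega
    · have := Finset.single_le_sum (f := fun j => w j k) (fun _ _ => Nat.zero_le _)
        (Finset.mem_univ (J ⟨i, hi⟩))
      omega
  · rintro ⟨j, hj⟩
    by_contra hcon
    push Not at hcon
    have h2 : ∀ k ∈ S, v j k ≤ a k := by
      intro k hk
      have h3 := hj k
      simp only [Finsupp.add_apply, Finsupp.equivFunOnFinite_symm_apply_apply, dif_pos hk,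
        hcon k hk] at h3
      have h4 := hJi ⟨k, hk⟩
      simp only at h4
      have h5 : w (J ⟨k, hk⟩) k ≠ 0 := fun h0 => by
        have := (h.2 k _).2 h0
        omega
      have h6 := (h.1 k j (J ⟨k, hk⟩)).2 (by omega)
      omega
    obtain ⟨i, hi, hmi⟩ := (ha (Finsupp.equivFunOnFinite.symm fun k =>
      if k ∈ S then 0 else v j k)).2 ⟨j, fun k => by
        simp only [Finsupp.add_apply, Finsupp.equivFunOnFinite_symm_apply_apply]
        split_ifs with hk
        · simpa using h2 k hk
        · omega⟩
    simp [hi] at hmi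

theorem ass_sub {K : Type} [Field K] {n q : ℕ} {v w : Fin q → Fin n →₀ ℕ} (h : OrdEq v w)
    (p : Ideal (MvPolynomial (Fin n) K))
    (hp : p ∈ associatedPrimes (MvPolynomial (Fin n) K)
      (MvPolynomial (Fin n) K ⧸ monIdeal K v)) :
    p ∈ associatedPrimes (MvPolynomial (Fin n) K)
      (MvPolynomial (Fin n) K ⧸ monIdeal K w) := by
  rw [mem_ass_iff] at hp ⊢
  obtain ⟨hp, hf⟩ := hp
  refine ⟨hp, ?_⟩
  obtain ⟨hmon, a, ha⟩ := ass_monomial v p hp hf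
  obtain ⟨b, hb⟩ := comb h {i | X i ∈ p} a (fun m => by
    rw [← ha, monomial_mem_prime p hp]; rfl)
  have hb' : ∀ m, monomial m (1 : K) ∈ p ↔ ∃ j, w j ≤ m + b := fun m => by
    rw [← hb, monomial_mem_prime p hp]; rfl
  refine ⟨monomial b 1, fun g => ⟨fun hg => ?_, fun hg => ?_⟩⟩
  · rw [g.as_sum, Finset.sum_mul]
    refine Ideal.sum_mem _ fun m hm => ?_
    have : monomial m (g.coeff m) * monomial b (1 : K) =
        C (g.coeff m) * monomial (m + b) (1 : K) := by
      rw [monomial_mul, C_mul_monomial]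
    rw [this]
    exact Ideal.mul_mem_left _ _ ((monomial_mem_monIdeal w _).2 ((hb' m).1 (hmon g hg m hm)))
  · rw [g.as_sum]
    refine Ideal.sum_mem _ fun m hm => ?_
    have : monomial m (g.coeff m) = C (g.coeff m) * monomial m (1 : K) := by
      rw [C_mul_monomial, mul_one]
    rw [this]
    refine Ideal.mul_mem_left _ _ ((hb' m).2 ((mem_monIdeal w _).1 hg (m + b) ?_))
    rw [mem_support_iff, coeff_mul_monomial, mul_one]
    exact mem_support_iff.1 hm

theorem le_prime_iff {K : Type} [Field K] {n q : ℕ} (v : Fin q → Fin n →₀ ℕ)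
    (p : Ideal (MvPolynomial (Fin n) K)) (hp : p.IsPrime) :
    monIdeal K v ≤ p ↔ ∀ j, ∃ i, X i ∈ p ∧ v j i ≠ 0 := by
  rw [monIdeal, Ideal.span_le, Set.range_subset_iff]
  exact forall_congr' fun j => monomial_mem_prime p hp (v j)

theorem heightOf_eq {K : Type} [Field K] {n q : ℕ} {v w : Fin q → Fin n →₀ ℕ}
    (h : OrdEq v w) : heightOf (monIdeal K v) = heightOf (monIdeal K w) := by
  have : { p : PrimeSpectrum (MvPolynomial (Fin n) K) | monIdeal K v ≤ p.asIdeal } =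
      { p : PrimeSpectrum (MvPolynomial (Fin n) K) | monIdeal K w ≤ p.asIdeal } := by
    ext p
    simp only [Set.mem_ofPred_eq]
    rw [le_prime_iff v _ p.2, le_prime_iff w _ p.2]
    simp only [ne_eq, h.2]
  rw [heightOf, heightOf, this]

theorem exists_zero {K : Type} [Field K] {n q : ℕ} (v : Fin q → Fin n →₀ ℕ)
    (hht : (2 : ℕ∞) ≤ heightOf (monIdeal K v)) (i : Fin n) : ∃ j, v j i = 0 := by
  by_contra hcon
  push Not at hcon
  have hpr : Prime (X i : MvPolynomial (Fin n) K) := X_prime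
  have hP : (Ideal.span {(X i : MvPolynomial (Fin n) K)}).IsPrime :=
    (Ideal.span_singleton_prime hpr.ne_zero).2 hpr
  have hle : monIdeal K v ≤ Ideal.span {(X i : MvPolynomial (Fin n) K)} :=
    (le_prime_iff v _ hP).2 fun j => ⟨i, Ideal.mem_span_singleton_self _, hcon j⟩
  have h1 : heightOf (monIdeal K v) ≤
      Order.height (⟨_, hP⟩ : PrimeSpectrum (MvPolynomial (Fin n) K)) :=
    iInf₂_le (⟨_, hP⟩ : PrimeSpectrum (MvPolynomial (Fin n) K)) hle
  rw [← PrimeSpectrum.height_eq_orderHeight] at h1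
  have h2 := Ideal.height_span_singleton_le_one hpr.not_isUnit
  have h3 := (hht.trans h1).trans h2
  exact absurd h3 (by decide)

theorem ordEq_sgn {n q : ℕ} (v : Fin q → Fin n →₀ ℕ) (hz : ∀ i, ∃ j, v j i = 0) :
    OrdEq v (sgnExp v) := by
  have hmono : ∀ i j k, v j i ≤ v k i → sgnExp v j i ≤ sgnExp v k i := by
    intro i j k h
    simp only [sgnExp, Finsupp.equivFunOnFinite_symm_apply_apply]
    refine Finset.card_le_card fun m hm => ?_
    rw [Finset.mem_filter] at hm ⊢
    exact ⟨hm.1, hm.2.trans_le h⟩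
  have hlt : ∀ i j k, v j i < v k i → sgnExp v j i < sgnExp v k i := by
    intro i j k h
    simp only [sgnExp, Finsupp.equivFunOnFinite_symm_apply_apply]
    refine Finset.card_lt_card ((Finset.ssubset_iff_of_subset fun m hm => ?_).2 ⟨v j i, ?_, ?_⟩)
    · rw [Finset.mem_filter] at hm ⊢
      exact ⟨hm.1, hm.2.trans h⟩
    · exact Finset.mem_filter.2 ⟨Finset.mem_image_of_mem _ (Finset.mem_univ j), h⟩
    · simp
  refine ⟨fun i j k => ⟨hlt i j k, fun h => ?_⟩, fun i j => ⟨fun h => ?_, fun h => ?_⟩⟩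
  · by_contra h'
    have := hmono i k j (not_lt.1 h')
    omega
  · simp [sgnExp, h]
  · obtain ⟨l, hl⟩ := hz i
    by_contra h'
    have := hlt i l j (by omega)
    omega

theorem unmixed_iff_unmixed_sgn (K : Type) [Field K] (n q : ℕ)
    (v : Fin q → Fin n →₀ ℕ) (hv : AntichainFam v)
    (I : Ideal (MvPolynomial (Fin n) K)) (hI : I = monIdeal K v)
    (hht : (2 : ℕ∞) ≤ heightOf I) :
    (∀ p ∈ associatedPrimes (MvPolynomial (Fin n) K) (MvPolynomial (Fin n) K ⧸ I),
        heightOf p = heightOf I) ↔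
      (∀ p ∈ associatedPrimes (MvPolynomial (Fin n) K)
          (MvPolynomial (Fin n) K ⧸ monIdeal K (sgnExp v)),
        heightOf p = heightOf (monIdeal K (sgnExp v))) := by
  subst hI
  have h := ordEq_sgn v (exists_zero v hht)
  rw [← heightOf_eq (K := K) h]
  exact ⟨fun H p hp => H p (ass_sub h.symm p hp), fun H p hp => H p (ass_sub h p hp)⟩
end

section
/- If I is a monomial ideal of R = K[x_1,…,x_n] that is not a principal ideal, then the signature ideal sgn(I) has height at least 2. -/
open MvPolynomial

/-- **Signature invariants of monomial ideals** (Proposition: height of the signature).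
If `I` is a monomial ideal of `R = K[x_1,…,x_n]` that is not a principal ideal, with
minimal monomial generating set `G(I) = {x^{v_1},…,x^{v_q}}`, then `ht(sgn(I)) ≥ 2`. -/
theorem two_le_height_sgn (K : Type) [Field K] (n q : ℕ)
    (v : Fin q → Fin n →₀ ℕ) (hv : AntichainFam v)
    (I : Ideal (MvPolynomial (Fin n) K)) (hI : I = monIdeal K v)
    (hnp : ¬ Submodule.IsPrincipal I) :
    (2 : ℕ∞) ≤ heightOf (monIdeal K (sgnExp v)) := by
  classical
  have hq : Nonempty (Fin q) := by
    by_contra h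
    rw [not_nonempty_iff] at h
    apply hnp
    rw [hI, monIdeal, Set.range_eq_empty, Ideal.span_empty]
    exact ⟨0, by simp⟩
  have key : ∀ p : Ideal (MvPolynomial (Fin n) K), p.IsPrime →
      monIdeal K (sgnExp v) ≤ p → ∀ j, ∃ i, sgnExp v j i ≠ 0 ∧ (X i : MvPolynomial (Fin n) K) ∈ p := by
    intro p hp hle j
    have h1 : monomial (sgnExp v j) (1 : K) ∈ p := hle (Ideal.subset_span ⟨j, rfl⟩)
    rw [monomial_eq, C_1, one_mul, Finsupp.prod, hp.prod_mem_iff] at h1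
    obtain ⟨i, hi, hm⟩ := h1
    exact ⟨i, Finsupp.mem_support_iff.mp hi, hp.mem_of_pow_mem _ hm⟩
  refine le_iInf₂ fun p hp => ?_
  obtain ⟨a, -, ha⟩ := key p.asIdeal p.2 hp hq.some
  obtain ⟨j, hj⟩ := Finite.exists_min fun k => v k a
  have hj0 : sgnExp v j a = 0 := by
    simp only [sgnExp, Finsupp.equivFunOnFinite_symm_apply_apply, Finset.card_eq_zero]
    rw [Finset.filter_eq_empty_iff]
    intro m hm
    obtain ⟨k, -, rfl⟩ := Finset.mem_image.mp hm
    exact not_lt.mpr (hj k)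
  obtain ⟨b, hb, hbp⟩ := key p.asIdeal p.2 hp j
  have hab : a ≠ b := by
    rintro rfl
    exact hb hj0
  have hpr : (Ideal.span {(X a : MvPolynomial (Fin n) K)}).IsPrime :=
    (Ideal.span_singleton_prime (X_ne_zero a)).mpr X_prime
  let P1 : PrimeSpectrum (MvPolynomial (Fin n) K) := ⟨_, hpr⟩
  let P0 : PrimeSpectrum (MvPolynomial (Fin n) K) := ⟨⊥, Ideal.isPrime_bot⟩
  have h01 : P0 < P1 := by
    rw [← PrimeSpectrum.asIdeal_lt_asIdeal]
    change ⊥ < Ideal.span {(X a : MvPolynomial (Fin n) K)}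
    rw [bot_lt_iff_ne_bot, Ne, Ideal.span_singleton_eq_bot]
    exact X_ne_zero a
  have h12 : P1 < p := by
    rw [← PrimeSpectrum.asIdeal_lt_asIdeal]
    refine lt_of_le_of_ne ((Ideal.span_singleton_le_iff_mem _).mpr ha) ?_
    intro h
    rw [← h] at hbp
    have h2 := Ideal.mem_span_singleton.mp hbp
    rw [X_dvd_X] at h2
    simp_all
  have e1 := Order.height_add_one_le h01
  have e2 := Order.height_add_one_le h12
  calc (2 : ℕ∞) = 0 + 1 + 1 := by norm_num
    _ ≤ Order.height P0 + 1 + 1 := by gcongr; exact zero_le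
    _ ≤ Order.height P1 + 1 := by gcongr
    _ ≤ _ := e2
end

section
/- Let I ⊆ R = K[x_1,…,x_n] be a monomial ideal of height 1 that is not a principal ideal, and let f be the greatest common divisor of the monomials in G(I). Then there is a monomial ideal L of R with ht(L) ≥ 2 such that I = f·L, depth(R/I) = depth(R/L), and sgn(I) = sgn(L). -/
open MvPolynomial

/-- The graded maximal ideal `(x_1, …, x_n)` of `K[x_1,…,x_n]`. -/
noncomputable def mIdeal (K : Type) [Field K] (n : ℕ) : Ideal (MvPolynomial (Fin n) K) :=
  Ideal.span (Set.range (X : Fin n → MvPolynomial (Fin n) K))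

/-- The depth of `R/I` with respect to the maximal ideal `(x_1, …, x_n)`: the largest
length of an `R/I`-regular sequence consisting of elements of `(x_1, …, x_n)`. -/
noncomputable def depthQuot (K : Type) [Field K] (n : ℕ)
    (I : Ideal (MvPolynomial (Fin n) K)) : ℕ :=
  sSup { k : ℕ | ∃ rs : List (MvPolynomial (Fin n) K), rs.length = k ∧
    (∀ r ∈ rs, r ∈ mIdeal K n) ∧
    RingTheory.Sequence.IsRegular (MvPolynomial (Fin n) K ⧸ I) rs }

open CategoryTheory Abelian in
lemma ext_shift_iff {R : Type} [CommRing R] (N : ModuleCat.{0} R)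
    (S : ShortComplex (ModuleCat.{0} R)) (hS : S.ShortExact) (k : ℕ)
    (h2 : ∀ i < k + 1, Subsingleton (Ext N S.X₂ i)) :
    (∀ i < k, Subsingleton (Ext N S.X₃ i)) ↔ (∀ i < k + 1, Subsingleton (Ext N S.X₁ i)) := by
  constructor
  · intro h i hi
    have := h2 i hi
    rcases i with _ | i
    · have := hS.mono_f
      exact (Ext.postcomp_mk₀_injective_of_mono N S.f).subsingleton
    · have := h i (by omega)
      refine subsingleton_of_forall_eq 0 fun x => ?_
      obtain ⟨y, rfl⟩ := Ext.covariant_sequence_exact₁ N hS x (Subsingleton.elim _ _) rfl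
      rw [Subsingleton.elim y 0]
      simp
  · intro h i hi
    have := h2 i (by omega)
    have := h (i + 1) (by omega)
    refine subsingleton_of_forall_eq 0 fun x => ?_
    obtain ⟨y, rfl⟩ := Ext.covariant_sequence_exact₃ N hS x rfl (Subsingleton.elim _ _)
    rw [Subsingleton.elim y 0]
    simp

lemma length_le_supportDim {R : Type} [CommRing R] [IsNoetherianRing R] (rs : List R) :
    ∀ (M : Type) [AddCommGroup M] [Module R M] [Module.Finite R M],
    RingTheory.Sequence.IsRegular M rs → (rs.length : WithBot ℕ∞) ≤ Module.supportDim R M := by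
  induction rs with
  | nil =>
    intro M _ _ _ h
    have := h.nontrivial
    have h1 := Module.supportDim_ne_bot_of_nontrivial R M
    obtain ⟨a, ha⟩ := WithBot.ne_bot_iff_exists.mp h1
    rw [← ha]
    exact WithBot.coe_le_coe.mpr (by simp)
  | cons x rs ih =>
    intro M _ _ _ h
    rw [RingTheory.Sequence.isRegular_cons_iff] at h
    have h1 := ih _ h.2
    have h2 := Module.supportDim_quotSMulTop_succ_le_of_notMem_minimalPrimes (R := R) (M := M)
      (x := x) (fun _ ↦ h.1.notMem_of_mem_minimalPrimes)
    refine le_trans ?_ h2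
    push_cast [List.length_cons]
    gcongr

lemma length_lt_of_regular (K : Type) [Field K] (n : ℕ) (J : Ideal (MvPolynomial (Fin n) K))
    (hJ : J ≠ ⊥) (rs : List (MvPolynomial (Fin n) K))
    (h : RingTheory.Sequence.IsRegular (MvPolynomial (Fin n) K ⧸ J) rs) : rs.length < n := by
  have h1 := length_le_supportDim rs _ h
  rw [Module.supportDim_quotient_eq_ringKrullDim] at h1
  obtain ⟨r, hr, hr0⟩ := Submodule.exists_mem_ne_zero_of_ne_bot hJ
  have h2 := ringKrullDim_succ_le_of_surjective (Ideal.Quotient.mk J)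
    Ideal.Quotient.mk_surjective (mem_nonZeroDivisors_of_ne_zero hr0)
    (Ideal.Quotient.eq_zero_iff_mem.mpr hr)
  rw [MvPolynomial.ringKrullDim_of_isNoetherianRing, ringKrullDim_eq_zero_of_field] at h2
  have h3 : ((rs.length : WithBot ℕ∞)) + 1 ≤ n := by
    refine le_trans (add_le_add_left h1 1) (h2.trans ?_)
    simp
  have h4 : ((rs.length + 1 : ℕ) : WithBot ℕ∞) ≤ (n : ℕ) := by exact_mod_cast h3
  have := Nat.cast_le.mp h4
  omega

lemma isWeaklyRegular_X (K : Type) [Field K] (n : ℕ) :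
    RingTheory.Sequence.IsWeaklyRegular (MvPolynomial (Fin n) K)
      (List.ofFn (X : Fin n → MvPolynomial (Fin n) K)) := by
  constructor
  intro i hi
  have hin : i < n := by simpa using hi
  have key : (Ideal.ofList ((List.ofFn (X : Fin n → MvPolynomial (Fin n) K)).take i) •
      (⊤ : Submodule (MvPolynomial (Fin n) K) (MvPolynomial (Fin n) K))) =
      Ideal.span (X '' {j : Fin n | j.1 < i}) := by
    rw [smul_eq_mul, Ideal.mul_top, Ideal.ofList]
    congr 1
    ext p
    simp only [Set.mem_ofPred_eq, Set.mem_image, List.mem_take_iff_getElem]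
    constructor
    · rintro ⟨j, hj, rfl⟩
      simp at hj
      exact ⟨⟨j, by omega⟩, by simpa using hj.1, by simp⟩
    · rintro ⟨j, hj, rfl⟩
      exact ⟨j, by simp; omega, by simp⟩
  rw [key, isSMulRegular_quotient_iff_mem_of_smul_mem]
  intro p hp
  rw [smul_eq_mul, MvPolynomial.mem_ideal_span_X_image] at hp
  rw [MvPolynomial.mem_ideal_span_X_image]
  intro m hm
  have h1 : m + Finsupp.single ⟨i, hin⟩ 1 ∈
    ((List.ofFn (X : Fin n → MvPolynomial (Fin n) K))[i] * p).support := by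
    rw [mem_support_iff] at hm ⊢
    simpa [mul_comm (X _) p, coeff_mul_X] using hm
  obtain ⟨j, hj, hj'⟩ := hp _ h1
  refine ⟨j, hj, ?_⟩
  have : (⟨i, hin⟩ : Fin n) ≠ j := by
    rintro rfl
    simp at hj
  simpa [Finsupp.single_apply, this] using hj'

lemma mIdeal_lt_top (K : Type) [Field K] (n : ℕ) : mIdeal K n < ⊤ := by
  rw [lt_top_iff_ne_top, Ne, Ideal.eq_top_iff_one, mIdeal, ← Set.image_univ,
    MvPolynomial.mem_ideal_span_X_image]
  intro h
  obtain ⟨i, _, hi⟩ := h 0 (by simp)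
  simp at hi

lemma smul_lt_quot (K : Type) [Field K] (n : ℕ) (J : Ideal (MvPolynomial (Fin n) K))
    (hJ : J ≤ mIdeal K n) :
    mIdeal K n • (⊤ : Submodule (MvPolynomial (Fin n) K) (MvPolynomial (Fin n) K ⧸ J)) < ⊤ := by
  rw [lt_top_iff_ne_top]
  intro h
  have h1 := congrArg (Submodule.comap (Submodule.mkQ J)) h
  rw [Submodule.comap_smul_top_of_surjective _ _ (Submodule.mkQ_surjective _)] at h1
  simp [hJ] at h1
  exact (mIdeal_lt_top K n).ne h1

open CategoryTheory Abelian in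
lemma ext_poly (K : Type) [Field K] (n : ℕ) (i : ℕ) (hi : i < n) :
    Subsingleton (Ext (ModuleCat.of (MvPolynomial (Fin n) K) (Shrink.{0} (MvPolynomial (Fin n) K ⧸ mIdeal K n)))
      (ModuleCat.of (MvPolynomial (Fin n) K) (MvPolynomial (Fin n) K)) i) := by
  have hlt : mIdeal K n • (⊤ : Submodule (MvPolynomial (Fin n) K) (MvPolynomial (Fin n) K)) < ⊤ := by
    simpa using mIdeal_lt_top K n
  have := (ModuleCat.exists_isRegular_tfae (mIdeal K n) n
    (ModuleCat.of (MvPolynomial (Fin n) K) (MvPolynomial (Fin n) K)) hlt).out 3 1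
  refine this.mp ⟨List.ofFn X, by simp, ?_, isWeaklyRegular_X K n, ?_⟩ i hi
  · intro r hr
    simp only [List.mem_ofFn] at hr
    obtain ⟨j, rfl⟩ := hr
    exact Ideal.subset_span ⟨j, rfl⟩
  · have : Ideal.ofList (List.ofFn (X : Fin n → MvPolynomial (Fin n) K)) = mIdeal K n := by
      rw [Ideal.ofList, mIdeal]
      congr 1
      ext p
      simp [List.mem_ofFn]
    rw [this]
    exact hlt.ne'

open CategoryTheory Abelian in
lemma regular_iff_ext (K : Type) [Field K] (n : ℕ) (L J : Ideal (MvPolynomial (Fin n) K))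
    (f : MvPolynomial (Fin n) K) (hf : f ≠ 0) (hJL : J = Ideal.span {f} * L)
    (hJm : J ≤ mIdeal K n) (k : ℕ) (hk : k < n) :
    (∃ rs : List (MvPolynomial (Fin n) K), rs.length = k ∧
    (∀ r ∈ rs, r ∈ mIdeal K n) ∧
    RingTheory.Sequence.IsRegular (MvPolynomial (Fin n) K ⧸ J) rs) ↔
    ∀ i < k + 1, Subsingleton (Ext (ModuleCat.of (MvPolynomial (Fin n) K) (Shrink.{0} (MvPolynomial (Fin n) K ⧸ mIdeal K n)))
      (ModuleCat.of (MvPolynomial (Fin n) K) L) i) := by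
  have h1 := (ModuleCat.exists_isRegular_tfae (mIdeal K n) k
    (ModuleCat.of (MvPolynomial (Fin n) K) (MvPolynomial (Fin n) K ⧸ J))
    (smul_lt_quot K n J hJm)).out 3 1
  refine h1.trans ?_
  let φ : L →ₗ[MvPolynomial (Fin n) K] MvPolynomial (Fin n) K :=
    (LinearMap.lsmul (MvPolynomial (Fin n) K) (MvPolynomial (Fin n) K) f).comp L.subtype
  have hφ : ∀ x : L, φ x = f * x := fun x => rfl
  have hex : Function.Exact φ (Submodule.mkQ J) := by
    intro y
    rw [Submodule.mkQ_apply, Submodule.Quotient.mk_eq_zero, hJL, Ideal.mem_span_singleton_mul]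
    constructor
    · rintro ⟨z, hz, rfl⟩
      exact ⟨⟨z, hz⟩, rfl⟩
    · rintro ⟨z, rfl⟩
      exact ⟨z, z.2, rfl⟩
  let S : ShortComplex (ModuleCat.{0} (MvPolynomial (Fin n) K)) :=
    ShortComplex.mk (ModuleCat.ofHom φ) (ModuleCat.ofHom (Submodule.mkQ J)) (by
      ext x
      exact hex.apply_apply_eq_zero x)
  have hS : S.ShortExact :=
    { exact := (ShortComplex.ShortExact.moduleCat_exact_iff_function_exact S).mpr hex
      mono_f := (ModuleCat.mono_iff_injective _).mpr (by
        intro x y hxy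
        have : f * (x : MvPolynomial (Fin n) K) = f * y := hxy
        exact Subtype.ext (mul_left_cancel₀ hf this))
      epi_g := (ModuleCat.epi_iff_surjective _).mpr (Submodule.mkQ_surjective J) }
  exact ext_shift_iff _ S hS k (fun i hi => ext_poly K n i (by omega))

lemma depthQuot_eq (K : Type) [Field K] (n : ℕ) (L J : Ideal (MvPolynomial (Fin n) K))
    (f : MvPolynomial (Fin n) K) (hf : f ≠ 0) (hL : L ≠ ⊥) (hJL : J = Ideal.span {f} * L)
    (hLm : L ≤ mIdeal K n) : depthQuot K n J = depthQuot K n L := by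
  have hJL' : J ≤ L := hJL ▸ Ideal.mul_le_right
  have hJ : J ≠ ⊥ := by
    rw [hJL]
    intro h
    rcases Ideal.mul_eq_bot.mp h with h | h
    · exact hf (by simpa using h)
    · exact hL h
  unfold depthQuot
  congr 1
  ext k
  simp only [Set.mem_ofPred_eq]
  by_cases hk : k < n
  · rw [regular_iff_ext K n L J f hf hJL (hJL'.trans hLm) k hk,
      regular_iff_ext K n L L 1 one_ne_zero (by simp) hLm k hk]
  · constructor
    · rintro ⟨rs, h1, h2, h3⟩
      exact absurd (h1 ▸ length_lt_of_regular K n J hJ rs h3) hk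
    · rintro ⟨rs, h1, h2, h3⟩
      exact absurd (h1 ▸ length_lt_of_regular K n L hL rs h3) hk

lemma X_mem_of_monomial_mem {K : Type} [Field K] {n : ℕ} (p : Ideal (MvPolynomial (Fin n) K))
    (hp : p.IsPrime) (m : Fin n →₀ ℕ) (h : monomial m (1 : K) ∈ p) :
    ∃ i, m i ≠ 0 ∧ X i ∈ p := by
  rw [MvPolynomial.monomial_eq, map_one, one_mul, Finsupp.prod] at h
  obtain ⟨i, hi, h'⟩ := (Ideal.IsPrime.prod_mem_iff).mp h
  exact ⟨i, by simpa using hi, hp.mem_of_pow_mem _ h'⟩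

lemma two_le_height {K : Type} [Field K] {n q : ℕ} (u : Fin q → Fin n →₀ ℕ) (hq : 0 < q)
    (hu : ∀ i, ∃ j, u j i = 0) : (2 : ℕ∞) ≤ heightOf (monIdeal K u) := by
  unfold heightOf
  refine le_iInf₂ fun p hp => ?_
  have hp' : ∀ j, monomial (u j) (1 : K) ∈ p.asIdeal := fun j => hp (Ideal.subset_span ⟨j, rfl⟩)
  obtain ⟨i, -, hi⟩ := X_mem_of_monomial_mem _ p.2 _ (hp' ⟨0, hq⟩)
  obtain ⟨j, hj⟩ := hu i
  obtain ⟨k, hk, hk'⟩ := X_mem_of_monomial_mem _ p.2 _ (hp' j)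
  have hprime : (Ideal.span {(X i : MvPolynomial (Fin n) K)}).IsPrime :=
    (Ideal.span_singleton_prime (X_ne_zero i)).mpr (MvPolynomial.X_prime)
  let p0 : PrimeSpectrum (MvPolynomial (Fin n) K) := ⟨⊥, Ideal.isPrime_bot⟩
  let p1 : PrimeSpectrum (MvPolynomial (Fin n) K) := ⟨_, hprime⟩
  have h01 : p0 < p1 := by
    rw [← PrimeSpectrum.asIdeal_lt_asIdeal]
    simp [p0, p1, bot_lt_iff_ne_bot]
  have h12 : p1 < p := by
    rw [← PrimeSpectrum.asIdeal_lt_asIdeal]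
    refine lt_of_le_of_ne ((Ideal.span_singleton_le_iff_mem _).mpr hi) fun h => ?_
    rw [← h] at hk'
    have h2 : X k ∈ Ideal.span (X '' ({i} : Set (Fin n)) : Set (MvPolynomial (Fin n) K)) := by
      simpa [p1] using hk'
    rw [MvPolynomial.mem_ideal_span_X_image] at h2
    obtain ⟨l, hl, hl'⟩ := h2 (Finsupp.single k 1) (by simp [support_X])
    rw [Set.mem_singleton_iff] at hl
    subst hl
    rw [Finsupp.single_apply] at hl'
    have : k = l := by by_contra h; simp [h] at hl'
    exact hk (this ▸ hj)
  have a := Order.height_add_one_le h01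
  have b := Order.height_add_one_le h12
  calc (2 : ℕ∞) = 0 + 1 + 1 := by norm_num
    _ ≤ Order.height p0 + 1 + 1 := by gcongr; simp
    _ ≤ _ := le_trans (by gcongr) b

lemma sgnExp_add {n q : ℕ} (u : Fin q → Fin n →₀ ℕ) (g : Fin n →₀ ℕ) :
    sgnExp (fun j => g + u j) = sgnExp u := by
  funext j
  unfold sgnExp
  congr 1
  funext i
  refine (Finset.card_bij (fun a _ => g i + a) ?_ ?_ ?_).symm
  · intro a ha
    simp only [Finset.mem_filter, Finset.mem_image, Finset.mem_univ, true_and] at ha ⊢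
    obtain ⟨⟨k, rfl⟩, h⟩ := ha
    exact ⟨⟨k, by simp⟩, by simpa using h⟩
  · intro a _ b _ h
    simpa using h
  · intro b hb
    simp only [Finset.mem_filter, Finset.mem_image, Finset.mem_univ, true_and] at hb
    obtain ⟨⟨k, rfl⟩, h⟩ := hb
    refine ⟨u k i, ?_, by simp⟩
    simp only [Finset.mem_filter, Finset.mem_image, Finset.mem_univ, true_and]
    exact ⟨⟨k, rfl⟩, by simpa using h⟩

lemma monIdeal_add (K : Type) [Field K] {n q : ℕ} (u : Fin q → Fin n →₀ ℕ) (g : Fin n →₀ ℕ) :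
    monIdeal K (fun j => g + u j) =
      Ideal.span {(monomial g (1 : K) : MvPolynomial (Fin n) K)} * monIdeal K u := by
  unfold monIdeal
  rw [Ideal.span_mul_span', Set.singleton_mul, ← Set.range_comp]
  congr 2
  funext j
  simp [monomial_mul]

/-- **Signature invariants of monomial ideals** (Proposition: reduction of height-one
ideals, depth).  Let `I` be a monomial ideal of `R = K[x_1,…,x_n]` of height `1` that is
not principal, with minimal monomial generating set `G(I) = {x^{v_1},…,x^{v_q}}`, and
let `f = x^g` be the greatest common divisor of the monomials in `G(I)` (so
`g i = min_j (v j) i`).  Then there is a monomial ideal `L` of height at least `2` such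
that `I = f·L`, `depth(R/I) = depth(R/L)` and `sgn(I) = sgn(L)`. -/
theorem height_one_factor_depth (K : Type) [Field K] (n q : ℕ)
    (v : Fin q → Fin n →₀ ℕ) (hv : AntichainFam v)
    (I : Ideal (MvPolynomial (Fin n) K)) (hI : I = monIdeal K v)
    (hnp : ¬ Submodule.IsPrincipal I) (hht : heightOf I = 1)
    (g : Fin n →₀ ℕ)
    (hg : g = Finsupp.equivFunOnFinite.symm fun i => sInf (Set.range fun j => v j i)) :
    ∃ (q' : ℕ) (u : Fin q' → Fin n →₀ ℕ), AntichainFam u ∧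
      (2 : ℕ∞) ≤ heightOf (monIdeal K u) ∧
      I = Ideal.span {(monomial g (1 : K) : MvPolynomial (Fin n) K)} * monIdeal K u ∧
      depthQuot K n I = depthQuot K n (monIdeal K u) ∧
      monIdeal K (sgnExp u) = monIdeal K (sgnExp v) := by
  have hq : 0 < q := by
    rcases Nat.eq_zero_or_pos q with h | h
    · subst h
      refine absurd ?_ hnp
      rw [hI, monIdeal, Set.range_eq_empty, Ideal.span_empty]
      exact inferInstance
    · exact h
  have : Nonempty (Fin q) := ⟨⟨0, hq⟩⟩
  have hgi : ∀ i, g i = sInf (Set.range fun j => v j i) := fun i => by rw [hg]; rfl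
  have hle : ∀ j, g ≤ v j := fun j i => by
    rw [hgi]
    exact Nat.sInf_le ⟨j, rfl⟩
  let u : Fin q → Fin n →₀ ℕ := fun j => v j - g
  have hvu : v = fun j => g + u j := by
    funext j
    exact (add_tsub_cancel_of_le (hle j)).symm
  have hu0 : ∀ i, ∃ j, u j i = 0 := fun i => by
    obtain ⟨j, hj⟩ := Nat.sInf_mem (Set.range_nonempty fun j => v j i)
    refine ⟨j, ?_⟩
    have h1 : v j i = g i := by rw [hgi]; exact hj
    simp [u, h1]
  have hIL : I = Ideal.span {(monomial g (1 : K) : MvPolynomial (Fin n) K)} * monIdeal K u := by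
    rw [hI, hvu]
    exact monIdeal_add K u g
  have hLm : monIdeal K u ≤ mIdeal K n := by
    unfold monIdeal
    rw [Ideal.span_le]
    rintro _ ⟨j, rfl⟩
    by_cases hj : u j = 0
    · refine absurd ?_ hnp
      have : monIdeal K u = ⊤ := by
        rw [Ideal.eq_top_iff_one]
        refine Ideal.subset_span ⟨j, ?_⟩
        simp [hj]
      rw [hIL, this, Ideal.mul_top]
      exact ⟨⟨_, rfl⟩⟩
    · rw [SetLike.mem_coe, mIdeal, ← Set.image_univ, MvPolynomial.mem_ideal_span_X_image]
      intro m hm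
      have hm' : m = u j := by
        simpa using MvPolynomial.support_monomial_subset hm
      subst hm'
      obtain ⟨i, hi⟩ := Finsupp.ne_iff.mp hj
      exact ⟨i, trivial, hi⟩
  have hL0 : monIdeal K u ≠ ⊥ := by
    intro h
    have h1 : monomial (u ⟨0, hq⟩) (1 : K) ∈ monIdeal K u := Ideal.subset_span ⟨_, rfl⟩
    rw [h] at h1
    simp at h1
  refine ⟨q, u, ?_, two_le_height u hq hu0, hIL,
    depthQuot_eq K n _ I _ (by simp) hL0 hIL hLm, ?_⟩
  · intro j k hjk
    apply hv j k
    rw [hvu]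
    exact add_le_add_right hjk g
  · conv_rhs => rw [hvu, sgnExp_add]
end

section
/- In the gap setup, the binomials x_0 − x_1^{q_1 − p} and x_0 − x_1 are both nonzerodivisors on the quotient ring R[x_0]/I_pol. -/
open MvPolynomial

theorem aux_nzd {σ K : Type} [Field K] [DecidableEq σ] (A : Set (σ →₀ ℕ)) (a b : σ) (hab : a ≠ b)
    (p m : ℕ) (h1 : ∀ e ∈ A, e a ≤ 1) (h2 : ∀ e ∈ A, e a = 0 → e b ≤ p)
    (h3 : ∀ e ∈ A, e a ≠ 0 → p ≤ e b) (J : Ideal (MvPolynomial σ K))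
    (hJ : J = Ideal.span ((fun e => monomial e (1 : K)) '' A)) :
    Ideal.Quotient.mk J (X a - X b ^ m) ∈ nonZeroDivisors (MvPolynomial σ K ⧸ J) := by
  rw [mem_nonZeroDivisors_iff_right]
  intro z hz
  obtain ⟨f, rfl⟩ := Ideal.Quotient.mk_surjective z
  rw [← map_mul, Ideal.Quotient.eq_zero_iff_mem, hJ, mem_ideal_span_monomial_image] at hz
  rw [Ideal.Quotient.eq_zero_iff_mem, hJ, mem_ideal_span_monomial_image]
  by_contra hf
  push Not at hf
  obtain ⟨u0, hu0, hu0'⟩ := hf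
  classical
  obtain ⟨u, hu, hmax⟩ := Finset.exists_max_image
    (f.support.filter (fun u => ∀ e ∈ A, ¬ e ≤ u)) (fun u => u a)
    ⟨u0, by simp only [Finset.mem_filter]; exact ⟨hu0, hu0'⟩⟩
  rw [Finset.mem_filter] at hu
  obtain ⟨huf, huA⟩ := hu
  have key : ∃ e ∈ A, e ≤ u + Finsupp.single a 1 := by
    by_contra hno
    push Not at hno
    have hc : coeff (u + Finsupp.single a 1) (f * (X a - X b ^ m)) = 0 := by
      by_contra hne
      obtain ⟨e, he, hle⟩ := hz _ (mem_support_iff.2 hne)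
      exact hno e he hle
    rw [mul_sub, coeff_sub, coeff_mul_X, X_pow_eq_monomial, coeff_mul_monomial'] at hc
    split_ifs at hc with hle
    · rw [mul_one, sub_eq_zero] at hc
      set v := u + Finsupp.single a 1 - Finsupp.single b m with hv
      have hva : v a = u a + 1 := by
        simp [hv, Finsupp.single_apply, hab.symm]
      have hvT := hmax v (by
        rw [Finset.mem_filter]
        refine ⟨?_, fun e he hle' => hno e he (hle'.trans tsub_le_self)⟩
        rw [mem_support_iff, ← hc]
        exact mem_support_iff.1 huf)
      omega
    · rw [sub_zero] at hc
      exact mem_support_iff.1 huf hc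
  obtain ⟨e, he, hle⟩ := key
  have hea : ¬ e a ≤ u a := by
    intro h
    apply huA e he
    intro i
    by_cases hi : i = a
    · subst hi; exact h
    · have := hle i
      simpa [Finsupp.single_apply, Ne.symm hi] using this
  have hea1 := h1 e he
  have hua : u a = 0 := by omega
  have hpb : p ≤ u b := by
    have := hle b
    simp only [Finsupp.add_apply, Finsupp.single_apply, hab, if_false] at this
    have := h3 e he (by omega)
    omega
  have hc : coeff (u + Finsupp.single b m) (f * (X a - X b ^ m)) ≠ 0 := by
    rw [mul_sub, coeff_sub, X_pow_eq_monomial, coeff_mul_monomial, coeff_mul_X', if_neg]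
    · simpa using huf
    · simp [hua, Finsupp.single_apply, hab.symm]
  obtain ⟨e', he', hle'⟩ := hz _ (mem_support_iff.2 hc)
  have hea' : e' a = 0 := by
    have := hle' a
    simpa [hua, Finsupp.single_apply, hab.symm] using this
  apply huA e' he'
  intro i
  by_cases hi : i = b
  · subst hi; exact (h2 e' he' hea').trans hpb
  · have := hle' i
    simpa [Finsupp.single_apply, Ne.symm hi] using this

/-- **Signature invariants of monomial ideals** (Lemma: regular elements on the weighted
partial polarization).  In the gap setup, where the minimal generating set of the
monomial ideal `I ⊆ R = K[x_1,…,x_n]` (of height at least `2`) is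
`G(I) = ⋃_{j=0}^{p} {x_1^j x^{γ_{i,j}}} ∪ {x_1^{q_i} x^{ε_i}}` with `q_1 - p ≥ 2`, the
pure binomials `x_0 - x_1^{q_1-p}` and `x_0 - x_1` are nonzerodivisors on
`R[x_0]/I_pol`, where `I_pol ⊆ R[x_0]` is the weighted partial polarization of `I`.
Here `R[x_0] = K[x_0,x_1,…,x_n]` is modelled as `MvPolynomial (Fin (n+1)) K`, the new
variable `x_0` being `X 0` and `x_i` being `X (Fin.succ (i-1))`. -/
theorem polarization_nonzerodivisors
    (K : Type) [Field K] (n : ℕ) (hn : 0 < n)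
    (p s : ℕ) (hs : 0 < s)
    (qe : Fin s → ℕ) (hmono : Monotone qe) (hq : p + 2 ≤ qe ⟨0, hs⟩)
    (k : Fin (p + 1) → ℕ) (hk : ∀ j, 0 < k j)
    (γ : (j : Fin (p + 1)) → Fin (k j) → (Fin n →₀ ℕ)) (hγ : ∀ j i, γ j i ⟨0, hn⟩ = 0)
    (ε : Fin s → (Fin n →₀ ℕ)) (hε : ∀ i, ε i ⟨0, hn⟩ = 0)
    (w : ((Σ j : Fin (p + 1), Fin (k j)) ⊕ Fin s) → (Fin n →₀ ℕ))
    (hw : w = Sum.elim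
      (fun ji : Σ j : Fin (p + 1), Fin (k j) =>
        Finsupp.single ⟨0, hn⟩ (ji.1 : ℕ) + γ ji.1 ji.2)
      (fun i : Fin s => Finsupp.single ⟨0, hn⟩ (qe i) + ε i))
    (hch : ∀ a b, w a ≤ w b → a = b)
    (I : Ideal (MvPolynomial (Fin n) K))
    (hI : I = Ideal.span (Set.range fun t => monomial (w t) (1 : K)))
    (hht : (2 : ℕ∞) ≤ heightOf I)
    (Ipol : Ideal (MvPolynomial (Fin (n + 1)) K))
    (hIpol : Ipol = Ideal.span
      ((Set.range fun ji : Σ j : Fin (p + 1), Fin (k j) =>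
          monomial (Finsupp.mapDomain Fin.succ (w (Sum.inl ji))) (1 : K)) ∪
       (Set.range fun i : Fin s =>
          monomial (Finsupp.single (0 : Fin (n + 1)) 1 +
            Finsupp.single (Fin.succ ⟨0, hn⟩) (qe i - qe ⟨0, hs⟩ + p) +
            Finsupp.mapDomain Fin.succ (ε i)) (1 : K))))
    :
    Ideal.Quotient.mk Ipol
        (X (0 : Fin (n + 1)) - X (Fin.succ ⟨0, hn⟩) ^ (qe ⟨0, hs⟩ - p)) ∈
      nonZeroDivisors (MvPolynomial (Fin (n + 1)) K ⧸ Ipol) ∧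
    Ideal.Quotient.mk Ipol (X (0 : Fin (n + 1)) - X (Fin.succ ⟨0, hn⟩)) ∈
      nonZeroDivisors (MvPolynomial (Fin (n + 1)) K ⧸ Ipol) := by
  have hsucc0 : ∀ v : Fin n →₀ ℕ, Finsupp.mapDomain Fin.succ v (0 : Fin (n + 1)) = 0 := by
    intro v
    apply Finsupp.mapDomain_of_notMem_range
    rintro ⟨x, hx⟩
    exact Fin.succ_ne_zero x hx
  have hsucc1 : ∀ v : Fin n →₀ ℕ, Finsupp.mapDomain Fin.succ v (Fin.succ ⟨0, hn⟩) = v ⟨0, hn⟩ :=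
    fun v => Finsupp.mapDomain_apply (Fin.succ_injective n) v _
  have hne : (0 : Fin (n + 1)) ≠ Fin.succ ⟨0, hn⟩ := (Fin.succ_ne_zero _).symm
  have main : ∀ m, Ideal.Quotient.mk Ipol
        (X (0 : Fin (n + 1)) - X (Fin.succ ⟨0, hn⟩) ^ m) ∈
      nonZeroDivisors (MvPolynomial (Fin (n + 1)) K ⧸ Ipol) := by
    intro m
    refine aux_nzd
      ((Set.range fun ji : Σ j : Fin (p + 1), Fin (k j) =>
          Finsupp.mapDomain Fin.succ (w (Sum.inl ji))) ∪
       (Set.range fun i : Fin s =>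
          Finsupp.single (0 : Fin (n + 1)) 1 +
            Finsupp.single (Fin.succ ⟨0, hn⟩) (qe i - qe ⟨0, hs⟩ + p) +
            Finsupp.mapDomain Fin.succ (ε i))) _ _ hne p m ?_ ?_ ?_ Ipol ?_
    · rintro e (⟨ji, rfl⟩ | ⟨i, rfl⟩)
      · simp only [hsucc0]; omega
      · simp [hsucc0, Finsupp.single_apply]
    · rintro e (⟨ji, rfl⟩ | ⟨i, rfl⟩) h
      · have := ji.1.2
        simp only [hsucc1, hw, Sum.elim_inl, Finsupp.add_apply, hγ, Finsupp.single_eq_same]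
        omega
      · simp [hsucc0, Finsupp.single_apply] at h
    · rintro e (⟨ji, rfl⟩ | ⟨i, rfl⟩) h
      · exact absurd (hsucc0 _) h
      · simp only [Finsupp.add_apply, Finsupp.single_eq_same]
        omega
    · rw [hIpol, Set.image_union, ← Set.range_comp, ← Set.range_comp]
      rfl
  exact ⟨main _, by simpa using main 1⟩
end

section
/- In the gap setup, the natural map R → R[x_0]/(I_pol, x_0 − x_1^{q_1 − p}) induces a ring isomorphism R/I ≅ R[x_0]/(I_pol, x_0 − x_1^{q_1 − p}); moreover, giving x_0 degree q_1 − p, this is an isomorphism of graded R-modules. -/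
open MvPolynomial

theorem qpi_monomial {K : Type} [Field K] {n : ℕ} (m : ℕ) (z : Fin n)
    (a : ℕ) (u : Fin n →₀ ℕ) (c : K) :
    aeval (Fin.cases (X z ^ m) (fun i => X i) : Fin (n + 1) → MvPolynomial (Fin n) K)
      (monomial (Finsupp.single (0 : Fin (n + 1)) a + Finsupp.mapDomain Fin.succ u) c)
      = monomial (Finsupp.single z (m * a) + u) c := by
  have h1 : (monomial (Finsupp.single (0 : Fin (n + 1)) a + Finsupp.mapDomain Fin.succ u) c)
      = X 0 ^ a * rename Fin.succ (monomial u c) := by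
    rw [rename_monomial, X_pow_eq_monomial, monomial_mul, one_mul]
  rw [h1, map_mul, map_pow, aeval_X, aeval_rename]
  have h2 : ((Fin.cases (X z ^ m) (fun i => X i) : Fin (n + 1) → MvPolynomial (Fin n) K)
      ∘ Fin.succ) = X := by
    funext i; simp
  rw [h2, aeval_X_left]
  simp only [Fin.cases_zero, AlgHom.id_apply]
  rw [← pow_mul, X_pow_eq_monomial, monomial_mul, one_mul]

theorem qpi_decomp {n : ℕ} (v : Fin (n + 1) →₀ ℕ) :
    v = Finsupp.single (0 : Fin (n + 1)) (v 0) + Finsupp.mapDomain Fin.succ v.tail := by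
  ext i
  refine Fin.cases ?_ (fun j => ?_) i
  · rw [Finsupp.add_apply, Finsupp.mapDomain_of_notMem_range]
    · simp
    · simp
  · rw [Finsupp.add_apply, Finsupp.mapDomain_apply (Fin.succ_injective n)]
    simp [Finsupp.tail_apply]

theorem qpi_hom {K : Type} [Field K] {n : ℕ} (m : ℕ) (z : Fin n) (d : ℕ)
    (g : MvPolynomial (Fin (n + 1)) K)
    (hg : IsWeightedHomogeneous (Fin.cases m (fun _ => 1) : Fin (n + 1) → ℕ) g d) :
    (aeval (Fin.cases (X z ^ m) (fun i => X i) : Fin (n + 1) → MvPolynomial (Fin n) K)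
      g).IsHomogeneous d := by
  rw [g.as_sum, map_sum]
  refine IsHomogeneous.sum _ _ _ (fun v hv => ?_)
  have h := hg (mem_support_iff.mp hv)
  have hd := qpi_decomp v
  generalize coeff v g = c
  rw [hd] at h ⊢
  rw [qpi_monomial]
  apply isHomogeneous_monomial
  rw [← h, map_add, map_add, Finsupp.weight_single, Finsupp.degree_single]
  congr 1
  · simp [mul_comm]
  · rw [Finsupp.degree_eq_weight_one, Finsupp.weight_apply, Finsupp.weight_apply,
      Finsupp.sum_mapDomain_index_inj (Fin.succ_injective n)]
    simp

theorem qpi_ren {K : Type} [Field K] {n : ℕ} (m : ℕ) (d : ℕ)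
    (f : MvPolynomial (Fin n) K) (hf : f.IsHomogeneous d) :
    IsWeightedHomogeneous (Fin.cases m (fun _ => 1) : Fin (n + 1) → ℕ)
      (rename Fin.succ f) d := by
  intro v hv
  obtain ⟨u, rfl, hu⟩ := coeff_rename_ne_zero _ _ _ hv
  rw [← hf hu, Finsupp.weight_apply, Finsupp.weight_apply,
      Finsupp.sum_mapDomain_index_inj (Fin.succ_injective n)]
  simp

/-- **Signature invariants of monomial ideals** (Lemma: the quotient by the weighted
partial polarization).  In the gap setup, the natural map
`R → R[x_0]/(I_pol, x_0 - x_1^{q_1-p})` (inclusion of variables followed by the quotient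
map) induces a ring isomorphism `R/I ≅ R[x_0]/(I_pol, x_0 - x_1^{q_1-p})`; moreover,
giving `x_0` the weight `q_1 - p` (and each `x_i` weight `1`), the isomorphism is graded:
it carries the degree-`d` part of `R/I` onto the degree-`d` part of the target for
every `d`.  Here `R[x_0] = K[x_0,x_1,…,x_n]` is modelled as `MvPolynomial (Fin (n+1)) K`,
with `x_0 = X 0` and `x_i = X (Fin.succ (i-1))`. -/
theorem quotient_polarization_iso
    (K : Type) [Field K] (n : ℕ) (hn : 0 < n)
    (p s : ℕ) (hs : 0 < s)
    (qe : Fin s → ℕ) (hmono : Monotone qe) (hq : p + 2 ≤ qe ⟨0, hs⟩)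
    (k : Fin (p + 1) → ℕ) (hk : ∀ j, 0 < k j)
    (γ : (j : Fin (p + 1)) → Fin (k j) → (Fin n →₀ ℕ)) (hγ : ∀ j i, γ j i ⟨0, hn⟩ = 0)
    (ε : Fin s → (Fin n →₀ ℕ)) (hε : ∀ i, ε i ⟨0, hn⟩ = 0)
    (w : ((Σ j : Fin (p + 1), Fin (k j)) ⊕ Fin s) → (Fin n →₀ ℕ))
    (hw : w = Sum.elim
      (fun ji : Σ j : Fin (p + 1), Fin (k j) =>
        Finsupp.single ⟨0, hn⟩ (ji.1 : ℕ) + γ ji.1 ji.2)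
      (fun i : Fin s => Finsupp.single ⟨0, hn⟩ (qe i) + ε i))
    (hch : ∀ a b, w a ≤ w b → a = b)
    (I : Ideal (MvPolynomial (Fin n) K))
    (hI : I = Ideal.span (Set.range fun t => monomial (w t) (1 : K)))
    (hht : (2 : ℕ∞) ≤ heightOf I)
    (Ipol : Ideal (MvPolynomial (Fin (n + 1)) K))
    (hIpol : Ipol = Ideal.span
      ((Set.range fun ji : Σ j : Fin (p + 1), Fin (k j) =>
          monomial (Finsupp.mapDomain Fin.succ (w (Sum.inl ji))) (1 : K)) ∪
       (Set.range fun i : Fin s =>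
          monomial (Finsupp.single (0 : Fin (n + 1)) 1 +
            Finsupp.single (Fin.succ ⟨0, hn⟩) (qe i - qe ⟨0, hs⟩ + p) +
            Finsupp.mapDomain Fin.succ (ε i)) (1 : K))))
    (J : Ideal (MvPolynomial (Fin (n + 1)) K))
    (hJ : J = Ipol ⊔ Ideal.span
      {X (0 : Fin (n + 1)) - X (Fin.succ ⟨0, hn⟩) ^ (qe ⟨0, hs⟩ - p)}) :
    ∃ e : (MvPolynomial (Fin n) K ⧸ I) ≃+* (MvPolynomial (Fin (n + 1)) K ⧸ J),
      (∀ r : MvPolynomial (Fin n) K,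
        e (Ideal.Quotient.mk I r) = Ideal.Quotient.mk J (rename Fin.succ r)) ∧
      (∀ d : ℕ,
        e '' (Ideal.Quotient.mk I '' { f : MvPolynomial (Fin n) K | f.IsHomogeneous d }) =
          Ideal.Quotient.mk J '' { g : MvPolynomial (Fin (n + 1)) K |
            IsWeightedHomogeneous
              (Fin.cases (qe ⟨0, hs⟩ - p) (fun _ => 1) : Fin (n + 1) → ℕ) g d }) := by
  set m := qe ⟨0, hs⟩ - p with hm
  set z : Fin n := ⟨0, hn⟩ with hz
  let φ : MvPolynomial (Fin (n + 1)) K →ₐ[K] MvPolynomial (Fin n) K :=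
    aeval (Fin.cases (X z ^ m) (fun i => X i) : Fin (n + 1) → MvPolynomial (Fin n) K)
  let ψ : MvPolynomial (Fin n) K →ₐ[K] MvPolynomial (Fin (n + 1)) K := rename Fin.succ
  have hφψ : ∀ f, φ (ψ f) = f := by
    intro f
    have : φ.comp ψ = AlgHom.id K _ := by
      ext i
      simp [φ, ψ]
    exact DFunLike.congr_fun this f
  have hexp : ∀ i : Fin s, m * 1 + (qe i - qe ⟨0, hs⟩ + p) = qe i := by
    intro i
    have : qe ⟨0, hs⟩ ≤ qe i := hmono (Fin.mk_le_of_le_val (Nat.zero_le _))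
    omega
  have hgen : ∀ i : Fin s, Finsupp.single (0 : Fin (n + 1)) 1 +
            Finsupp.single (Fin.succ z) (qe i - qe ⟨0, hs⟩ + p) +
            Finsupp.mapDomain Fin.succ (ε i) = Finsupp.single (0 : Fin (n + 1)) 1 +
            Finsupp.mapDomain Fin.succ (Finsupp.single z (qe i - qe ⟨0, hs⟩ + p) + ε i) := by
    intro i
    rw [Finsupp.mapDomain_add, Finsupp.mapDomain_single, add_assoc]
  have hφgen : ∀ i : Fin s, φ (monomial (Finsupp.single (0 : Fin (n + 1)) 1 +
            Finsupp.single (Fin.succ z) (qe i - qe ⟨0, hs⟩ + p) +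
            Finsupp.mapDomain Fin.succ (ε i)) (1 : K)) = monomial (w (Sum.inr i)) 1 := by
    intro i
    rw [hgen]
    simp only [φ]
    rw [qpi_monomial, ← add_assoc, ← Finsupp.single_add, hexp, hw]
    rfl
  have hψmon : ∀ u : Fin n →₀ ℕ, ψ (monomial u 1) = monomial (Finsupp.mapDomain Fin.succ u) 1 :=
    fun u => rename_monomial _ _ _
  have hψφ : ∀ g, Ideal.Quotient.mk J (ψ (φ g)) = Ideal.Quotient.mk J g := by
    intro g
    have : ((Ideal.Quotient.mkₐ K J).comp ψ).comp φ = Ideal.Quotient.mkₐ K J := by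
      ext i
      refine Fin.cases ?_ (fun j => ?_) i
      · simp only [AlgHom.comp_apply, φ, ψ, aeval_X, Fin.cases_zero, map_pow, rename_X]
        rw [← map_pow]
        symm
        apply Ideal.Quotient.eq.mpr
        rw [hJ]
        exact Ideal.mem_sup_right (Ideal.subset_span rfl)
      · simp [φ, ψ]
    exact DFunLike.congr_fun this g
  have hJI : ∀ g ∈ J, φ g ∈ I := by
    have : J ≤ I.comap φ := by
      rw [hJ, hIpol]
      refine sup_le (Ideal.span_le.mpr ?_) (Ideal.span_le.mpr ?_)
      · rintro _ (⟨ji, rfl⟩ | ⟨i, rfl⟩)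
        · change φ _ ∈ I
          beta_reduce
          rw [← hψmon, hφψ, hI]
          exact Ideal.subset_span ⟨_, rfl⟩
        · change φ _ ∈ I
          beta_reduce
          rw [hφgen, hI]
          exact Ideal.subset_span ⟨_, rfl⟩
      · rintro _ rfl
        change φ _ ∈ I
        simp [φ]
    exact this
  have hIJ : ∀ f ∈ I, ψ f ∈ J := by
    have : I ≤ J.comap ψ := by
      rw [hI]
      refine Ideal.span_le.mpr ?_
      have hle : Ipol ≤ J := hJ ▸ le_sup_left
      rintro _ ⟨ji | i, rfl⟩
      · change ψ _ ∈ J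
        beta_reduce
        rw [hψmon]
        apply hle
        rw [hIpol]
        exact Ideal.subset_span (Or.inl ⟨ji, rfl⟩)
      · change ψ (monomial (w (Sum.inr i)) 1) ∈ J
        rw [← hφgen i, ← Ideal.Quotient.eq_zero_iff_mem, hψφ, Ideal.Quotient.eq_zero_iff_mem]
        apply hle
        rw [hIpol]
        exact Ideal.subset_span (Or.inr ⟨i, rfl⟩)
    exact this
  let F : (MvPolynomial (Fin n) K ⧸ I) →+* (MvPolynomial (Fin (n + 1)) K ⧸ J) :=
    Ideal.Quotient.lift I ((Ideal.Quotient.mk J).comp (ψ : _ →+* _))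
      (fun f hf => Ideal.Quotient.eq_zero_iff_mem.mpr (hIJ f hf))
  let G : (MvPolynomial (Fin (n + 1)) K ⧸ J) →+* (MvPolynomial (Fin n) K ⧸ I) :=
    Ideal.Quotient.lift J ((Ideal.Quotient.mk I).comp (φ : _ →+* _))
      (fun f hf => Ideal.Quotient.eq_zero_iff_mem.mpr (hJI f hf))
  have hF : ∀ f, F (Ideal.Quotient.mk I f) = Ideal.Quotient.mk J (ψ f) := fun f => rfl
  have hG : ∀ g, G (Ideal.Quotient.mk J g) = Ideal.Quotient.mk I (φ g) := fun g => rfl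
  have hFG : F.comp G = RingHom.id _ := by
    apply RingHom.ext
    intro x
    obtain ⟨g, rfl⟩ := Ideal.Quotient.mk_surjective x
    rw [RingHom.comp_apply, hG, hF, hψφ]; rfl
  have hGF : G.comp F = RingHom.id _ := by
    apply RingHom.ext
    intro x
    obtain ⟨g, rfl⟩ := Ideal.Quotient.mk_surjective x
    rw [RingHom.comp_apply, hF, hG, hφψ]; rfl
  refine ⟨RingEquiv.ofRingHom F G hFG hGF, fun r => rfl, fun d => ?_⟩
  ext y
  constructor
  · rintro ⟨_, ⟨f, hf, rfl⟩, rfl⟩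
    exact ⟨ψ f, qpi_ren m d f hf, rfl⟩
  · rintro ⟨g, hg, rfl⟩
    exact ⟨_, ⟨φ g, qpi_hom m z d g hg, rfl⟩, hψφ g⟩
end

section
/- In the gap setup, depth(R/I) = depth(R/I_sft) and dim(R/I) = dim(R/I_sft), where dim denotes Krull dimension. -/
open MvPolynomial

section ShiftAux

/-- There is a chain of `k` successive nonzerodivisors in `J` modulo `I`. -/
def RegD {A : Type*} [CommRing A] (J : Ideal A) : ℕ → Ideal A → Prop
  | 0, _ => True
  | k + 1, I => ∃ f ∈ J, (∀ z, f * z ∈ I → z ∈ I) ∧ RegD J k (I ⊔ Ideal.span {f})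

theorem exists_regular_of_module {A M : Type*} [CommRing A] [IsNoetherianRing A]
    [AddCommGroup M] [Module A M] [Module.Finite A M] (J : Ideal A)
    (h : ∀ m : M, (∀ j ∈ J, j • m = 0) → m = 0) :
    ∃ f ∈ J, ∀ m : M, f • m = 0 → m = 0 := by
  by_contra hcon
  push Not at hcon
  have hsub : (J : Set A) ⊆ ⋃ p ∈ associatedPrimes A M, (p : Set A) := by
    rw [biUnion_associatedPrimes_eq_zero_divisors]
    intro f hf
    obtain ⟨m, h1, h2⟩ := hcon f hf
    exact ⟨m, h2, h1⟩
  obtain ⟨P, hP, hJP⟩ := (Ideal.subset_union_prime_finite (associatedPrimes.finite A M)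
    (f := id) 0 0 (fun i hi _ _ => hi.isPrime)).1 hsub
  have hP' := hP
  rw [AssociatedPrimes.mem_iff, isAssociatedPrime_iff] at hP'
  obtain ⟨hprime, x, hx⟩ := hP'
  have hx0 : x = 0 := h x (fun j hj => by
    have : j ∈ P := hJP hj
    rw [hx] at this
    simpa using this)
  apply hprime.ne_top
  rw [hx, hx0]
  ext; simp

theorem exists_regular3 {A : Type*} [CommRing A] [IsNoetherianRing A] (J I₁ I₂ I₃ : Ideal A)
    (h₁ : ∀ z, (∀ j ∈ J, j * z ∈ I₁) → z ∈ I₁)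
    (h₂ : ∀ z, (∀ j ∈ J, j * z ∈ I₂) → z ∈ I₂)
    (h₃ : ∀ z, (∀ j ∈ J, j * z ∈ I₃) → z ∈ I₃) :
    ∃ f ∈ J, (∀ z, f * z ∈ I₁ → z ∈ I₁) ∧ (∀ z, f * z ∈ I₂ → z ∈ I₂) ∧
      (∀ z, f * z ∈ I₃ → z ∈ I₃) := by
  have aux : ∀ (I : Ideal A), (∀ z, (∀ j ∈ J, j * z ∈ I) → z ∈ I) →
      ∀ m : A ⧸ I, (∀ j ∈ J, j • m = 0) → m = 0 := by
    intro I hI m hm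
    obtain ⟨z, rfl⟩ := Ideal.Quotient.mk_surjective m
    rw [Ideal.Quotient.eq_zero_iff_mem]
    apply hI
    intro j hj
    exact Ideal.Quotient.eq_zero_iff_mem.1 (hm j hj)
  obtain ⟨f, hf, hreg⟩ := exists_regular_of_module (M := (A ⧸ I₁) × (A ⧸ I₂) × (A ⧸ I₃)) J (by
    rintro ⟨a, b, c⟩ hm
    simp only [Prod.smul_mk, Prod.mk_eq_zero] at hm
    rw [aux I₁ h₁ a (fun j hj => (hm j hj).1), aux I₂ h₂ b (fun j hj => (hm j hj).2.1),
      aux I₃ h₃ c (fun j hj => (hm j hj).2.2)]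
    rfl)
  refine ⟨f, hf, fun z hz => ?_, fun z hz => ?_, fun z hz => ?_⟩
  · have := hreg (Ideal.Quotient.mk I₁ z, 0, 0) (by
      simp only [Prod.smul_mk, Prod.mk_eq_zero, smul_zero, and_true]
      exact Ideal.Quotient.eq_zero_iff_mem.2 hz)
    simp only [Prod.mk_eq_zero, and_true] at this
    exact Ideal.Quotient.eq_zero_iff_mem.1 this
  · have := hreg (0, Ideal.Quotient.mk I₂ z, 0) (by
      simp only [Prod.smul_mk, Prod.mk_eq_zero, smul_zero, and_true, true_and]
      exact Ideal.Quotient.eq_zero_iff_mem.2 hz)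
    simp only [Prod.mk_eq_zero, and_true, true_and] at this
    exact Ideal.Quotient.eq_zero_iff_mem.1 this
  · have := hreg (0, 0, Ideal.Quotient.mk I₃ z) (by
      simp only [Prod.smul_mk, Prod.mk_eq_zero, smul_zero, true_and]
      exact Ideal.Quotient.eq_zero_iff_mem.2 hz)
    simp only [Prod.mk_eq_zero, true_and] at this
    exact Ideal.Quotient.eq_zero_iff_mem.1 this

theorem mem_sup_span_iff {A : Type*} [CommRing A] {I : Ideal A} {f z : A} :
    z ∈ I ⊔ Ideal.span {f} ↔ ∃ a, z - f * a ∈ I := by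
  rw [Submodule.mem_sup]
  constructor
  · rintro ⟨y, hy, w, hw, rfl⟩
    obtain ⟨a, rfl⟩ := Ideal.mem_span_singleton'.1 hw
    exact ⟨a, by convert hy using 1; ring⟩
  · rintro ⟨a, ha⟩
    exact ⟨_, ha, f * a, Ideal.mem_span_singleton'.2 ⟨a, by ring⟩, by ring⟩

/-- swapping a regular pair -/
theorem swap_regular {A : Type*} [CommRing A] {I : Ideal A} {f h : A}
    (hf : ∀ z, f * z ∈ I → z ∈ I)
    (hh : ∀ z, h * z ∈ I ⊔ Ideal.span {f} → z ∈ I ⊔ Ideal.span {f}) :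
    ∀ z, f * z ∈ I ⊔ Ideal.span {h} → z ∈ I ⊔ Ideal.span {h} := by
  intro z hz
  obtain ⟨w, hw⟩ := mem_sup_span_iff.1 hz
  have h1 : h * w ∈ I ⊔ Ideal.span {f} :=
    mem_sup_span_iff.2 ⟨z, by convert I.neg_mem hw using 1; ring⟩
  obtain ⟨w', hw'⟩ := mem_sup_span_iff.1 (hh w h1)
  refine mem_sup_span_iff.2 ⟨w', hf _ ?_⟩
  convert I.add_mem hw (I.mul_mem_left h hw') using 1
  ring

theorem socle_transfer {A : Type*} [CommRing A] {I J : Ideal A} {f g : A}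
    (hfJ : f ∈ J) (hf : ∀ z, f * z ∈ I → z ∈ I) (hg : ∀ z, g * z ∈ I → z ∈ I)
    (hs : ∀ z, (∀ j ∈ J, j * z ∈ I ⊔ Ideal.span {f}) → z ∈ I ⊔ Ideal.span {f}) :
    ∀ z, (∀ j ∈ J, j * z ∈ I ⊔ Ideal.span {g}) → z ∈ I ⊔ Ideal.span {g} := by
  intro z hz
  obtain ⟨w, hw⟩ := mem_sup_span_iff.1 (hz f hfJ)
  have hwf : w ∈ I ⊔ Ideal.span {f} := by
    apply hs
    intro j hj
    obtain ⟨a, ha⟩ := mem_sup_span_iff.1 (hz j hj)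
    refine mem_sup_span_iff.2 ⟨a, hg _ ?_⟩
    convert I.sub_mem (I.mul_mem_left f ha) (I.mul_mem_left j hw) using 1
    ring
  obtain ⟨b, hb⟩ := mem_sup_span_iff.1 hwf
  refine mem_sup_span_iff.2 ⟨b, hf _ ?_⟩
  convert I.add_mem hw (I.mul_mem_left g hb) using 1
  ring

theorem regD_exchange {A : Type*} [CommRing A] [IsNoetherianRing A] (J : Ideal A) (k : ℕ) :
    ∀ (I : Ideal A) (f g : A), f ∈ J → g ∈ J → (∀ z, f * z ∈ I → z ∈ I) →
      (∀ z, g * z ∈ I → z ∈ I) → RegD J k (I ⊔ Ideal.span {f}) →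
      RegD J k (I ⊔ Ideal.span {g}) := by
  induction k with
  | zero => intros; trivial
  | succ k ih =>
    intro I f g hfJ hgJ hf hg hD
    obtain ⟨f₁, hf₁J, hf₁, hD₁⟩ := hD
    have hs : ∀ z, (∀ j ∈ J, j * z ∈ I ⊔ Ideal.span {f}) → z ∈ I ⊔ Ideal.span {f} :=
      fun z hz => hf₁ z (hz f₁ hf₁J)
    obtain ⟨h, hhJ, hhI, hhf, hhg⟩ := exists_regular3 J I (I ⊔ Ideal.span {f})
      (I ⊔ Ideal.span {g}) (fun z hz => hf z (hz f hfJ)) hs (socle_transfer hfJ hf hg hs)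
    have h1 := ih _ f₁ h hf₁J hhJ hf₁ hhf hD₁
    rw [sup_right_comm] at h1
    have h2 := ih _ f g hfJ hgJ (swap_regular hf hhf) (swap_regular hg hhg) h1
    rw [sup_right_comm] at h2
    exact ⟨h, hhJ, hhg, h2⟩

theorem regD_comap {A B : Type*} [CommRing A] [CommRing B] (φ : A →+* B)
    (hφ : Function.Surjective φ) (J : Ideal B) (k : ℕ) :
    ∀ I : Ideal B, RegD (J.comap φ) k (I.comap φ) ↔ RegD J k I := by
  have key : ∀ (I : Ideal B) (f : A),
      I.comap φ ⊔ Ideal.span {f} = (I ⊔ Ideal.span {φ f}).comap φ := by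
    intro I f
    ext z
    rw [mem_sup_span_iff, Ideal.mem_comap, mem_sup_span_iff, hφ.exists]
    simp [Ideal.mem_comap]
  induction k with
  | zero => intro I; exact Iff.rfl
  | succ k ih =>
    intro I
    simp only [RegD]
    rw [hφ.exists]
    refine exists_congr fun f => and_congr Iff.rfl (and_congr ?_ ?_)
    · rw [hφ.forall]; simp [Ideal.mem_comap]
    · rw [key, ih]

theorem isRegular_iff_regD {A : Type*} [CommRing A] (J : Ideal A) (hJ : J ≠ ⊤) (k : ℕ) :
    ∀ I : Ideal A, I ≤ J → ((∃ rs : List A, rs.length = k ∧ (∀ r ∈ rs, r ∈ J) ∧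
      RingTheory.Sequence.IsRegular (A ⧸ I) rs) ↔ RegD J k I) := by
  induction k with
  | zero =>
    intro I hI
    refine ⟨fun _ => trivial, fun _ => ⟨[], rfl, by simp, ?_⟩⟩
    have : Nontrivial (A ⧸ I) := Ideal.Quotient.nontrivial_iff.2
      (fun h => hJ (top_le_iff.1 (h ▸ hI)))
    exact RingTheory.Sequence.IsRegular.nil _ _
  | succ k ih =>
    intro I hI
    have hreg : ∀ f : A, IsSMulRegular (A ⧸ I) f ↔ ∀ z, f * z ∈ I → z ∈ I := by
      intro f
      rw [isSMulRegular_iff_right_eq_zero_of_smul]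
      rw [Ideal.Quotient.mk_surjective.forall]
      refine forall_congr' fun z => ?_
      rw [Ideal.Quotient.eq_zero_iff_mem, ← Ideal.Quotient.eq_zero_iff_mem (a := f * z)]
      rfl
    have hquot : ∀ (f : A) (rs : List A),
        RingTheory.Sequence.IsRegular (QuotSMulTop f (A ⧸ I)) rs ↔
        RingTheory.Sequence.IsRegular (A ⧸ (I ⊔ Ideal.span {f})) rs := by
      intro f rs
      refine LinearEquiv.isRegular_congr ?_ rs
      refine (Submodule.quotEquivOfEq _ _ ?_) ≪≫ₗ
        Submodule.quotientQuotientEquivQuotientSup I (Ideal.span {f})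
      ext x
      rw [Submodule.mem_smul_pointwise_iff_exists, Submodule.mem_map]
      constructor
      · rintro ⟨b, -, rfl⟩
        obtain ⟨b, rfl⟩ := Ideal.Quotient.mk_surjective b
        exact ⟨f * b, Ideal.mem_span_singleton'.2 ⟨b, mul_comm _ _⟩, rfl⟩
      · rintro ⟨y, hy, rfl⟩
        obtain ⟨b, rfl⟩ := Ideal.mem_span_singleton'.1 hy
        exact ⟨Ideal.Quotient.mk I b, trivial, by rw [mul_comm]; rfl⟩
    constructor
    · rintro ⟨rs, hlen, hmem, hr⟩
      match rs, hlen with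
      | f :: rs, hlen =>
        rw [RingTheory.Sequence.isRegular_cons_iff, hreg, hquot] at hr
        have hfJ : f ∈ J := hmem f (by simp)
        refine ⟨f, hfJ, hr.1, (ih _ (sup_le hI ?_)).1 ⟨rs, by simpa using hlen,
          fun r h => hmem r (by simp [h]), hr.2⟩⟩
        rwa [Ideal.span_singleton_le_iff_mem]
    · rintro ⟨f, hfJ, hf, hD⟩
      obtain ⟨rs, hlen, hmem, hr⟩ := (ih _ (sup_le hI
        ((Ideal.span_singleton_le_iff_mem J).2 hfJ))).2 hD
      refine ⟨f :: rs, by simp [hlen], ?_, ?_⟩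
      · intro r h
        rcases List.mem_cons.1 h with rfl | h
        · exact hfJ
        · exact hmem r h
      · rw [RingTheory.Sequence.isRegular_cons_iff, hreg, hquot]
        exact ⟨hf, hr⟩

/-- polynomial part -/
theorem regD_stretch {B : Type*} [CommRing B] [IsNoetherianRing B] (M A₀ A₁ : Ideal B)
    (h01 : A₀ ≤ A₁) (x : B) (hx : x ∈ M) (hreg : ∀ z ∈ A₁, x * z ∈ A₀ → z ∈ A₀) (k : ℕ)
    (m l : ℕ) (hm : 0 < m) (hl : 0 < l)
    (h : RegD M k (A₀ ⊔ Ideal.span {x ^ m} * A₁)) :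
    RegD M k (A₀ ⊔ Ideal.span {x ^ l} * A₁) := by
  classical
  have hregp : ∀ m, ∀ z ∈ A₁, x ^ m * z ∈ A₀ → z ∈ A₀ := by
    intro m
    induction m with
    | zero => intro z _ h; simpa using h
    | succ m ih =>
      intro z hz h
      refine ih z hz (hreg _ (A₁.mul_mem_left _ hz) ?_)
      convert h using 1; ring
  let T : Ideal (Polynomial B) :=
    A₁.map Polynomial.C ⊓ A₀.comap (Polynomial.evalRingHom (0 : B))
  have memT : ∀ F, F ∈ T ↔ (∀ i, F.coeff i ∈ A₁) ∧ F.coeff 0 ∈ A₀ := by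
    intro F
    simp only [T, Ideal.mem_inf, Ideal.mem_map_C_iff, Ideal.mem_comap,
      Polynomial.coe_evalRingHom, Polynomial.coeff_zero_eq_eval_zero]
  have hT : ∀ m, ∀ F, (Polynomial.X - Polynomial.C (x ^ m)) * F ∈ T → F ∈ T := by
    intro m F hF
    rw [memT] at hF ⊢
    have hall : ∀ i, F.coeff i ∈ A₁ := by
      have hstep : ∀ i, F.coeff (i + 1) ∈ A₁ → F.coeff i ∈ A₁ := by
        intro i hi
        have h1 := hF.1 (i + 1)
        rw [sub_mul, Polynomial.coeff_sub, Polynomial.coeff_X_mul, Polynomial.coeff_C_mul] at h1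
        have := A₁.add_mem h1 (A₁.mul_mem_left (x ^ m) hi)
        simpa using this
      have : ∀ d i, F.natDegree < i + d → F.coeff i ∈ A₁ := by
        intro d
        induction d with
        | zero =>
          intro i hi
          rw [Polynomial.coeff_eq_zero_of_natDegree_lt (by simpa using hi)]
          exact A₁.zero_mem
        | succ d ih => intro i hi; exact hstep i (ih (i + 1) (by omega))
      intro i
      exact this (F.natDegree + 1) i (by omega)
    refine ⟨hall, hregp m _ (hall 0) ?_⟩
    have h2 := A₀.neg_mem hF.2
    rw [sub_mul, Polynomial.coeff_sub, Polynomial.coeff_C_mul, Polynomial.coeff_X_mul_zero] at h2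
    simpa using h2
  let J : Ideal (Polynomial B) := M.comap (Polynomial.evalRingHom (0 : B))
  have hsub : ∀ m, 0 < m → ∀ F : Polynomial B, ∃ b, F.eval (x ^ m) = F.eval 0 + x ^ m * b := by
    intro m _ F
    obtain ⟨b, hb⟩ := Polynomial.sub_dvd_eval_sub (x ^ m) 0 F
    exact ⟨b, by rw [sub_zero] at hb; rw [← hb]; ring⟩
  have hJ : ∀ m, 0 < m → M.comap (Polynomial.evalRingHom (x ^ m)) = J := by
    intro m hm
    ext F
    obtain ⟨b, hb⟩ := hsub m hm F
    have : x ^ m * b ∈ M := M.mul_mem_right _ (M.pow_mem_of_mem hx m hm)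
    simp only [J, Ideal.mem_comap, Polynomial.coe_evalRingHom, hb]
    exact Ideal.add_mem_iff_left _ this
  have hsurj : ∀ c : B, Function.Surjective (Polynomial.evalRingHom c) := fun c b =>
    ⟨Polynomial.C b, by simp⟩
  have hcomap : ∀ m, (A₀ ⊔ Ideal.span {x ^ m} * A₁).comap (Polynomial.evalRingHom (x ^ m)) =
      T ⊔ Ideal.span {Polynomial.X - Polynomial.C (x ^ m)} := by
    intro m
    apply le_antisymm
    · intro F hF
      rw [Ideal.mem_comap, Submodule.mem_sup] at hF
      obtain ⟨a, ha, w, hw, haw⟩ := hF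
      obtain ⟨c, hc, rfl⟩ := Ideal.mem_span_singleton_mul.1 hw
      have hG : Polynomial.C a + Polynomial.X * Polynomial.C c ∈ T := by
        rw [memT]
        constructor
        · intro i
          rcases i with _ | i
          · simpa using h01 ha
          · rw [Polynomial.coeff_add, Polynomial.coeff_X_mul, Polynomial.coeff_C,
              Polynomial.coeff_C]
            rw [if_neg (by omega), zero_add]
            split_ifs
            · exact hc
            · exact A₁.zero_mem
        · simpa using ha
      have hker : F - (Polynomial.C a + Polynomial.X * Polynomial.C c) ∈
          Ideal.span {Polynomial.X - Polynomial.C (x ^ m)} := by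
        rw [← Polynomial.ker_evalRingHom, RingHom.mem_ker, map_sub, ← haw]
        simp only [Polynomial.coe_evalRingHom, Polynomial.eval_add, Polynomial.eval_mul,
          Polynomial.eval_X, Polynomial.eval_C, sub_self]
      have := add_mem (Ideal.mem_sup_right (S := T) hker)
        (Ideal.mem_sup_left (T := Ideal.span {Polynomial.X - Polynomial.C (x ^ m)}) hG)
      simpa using this
    · apply sup_le
      · intro F hF
        rw [memT] at hF
        rw [Ideal.mem_comap, ← Polynomial.X_mul_divX_add F]
        simp only [Polynomial.coe_evalRingHom, Polynomial.eval_add, Polynomial.eval_mul,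
          Polynomial.eval_X, Polynomial.eval_C]
        refine add_mem (Ideal.mem_sup_right ?_) (Ideal.mem_sup_left hF.2)
        refine Ideal.mul_mem_mul (Ideal.mem_span_singleton_self _) ?_
        rw [Polynomial.eval_eq_sum]
        refine A₁.sum_mem fun i _ => A₁.mul_mem_right _ ?_
        rw [Polynomial.coeff_divX]
        exact hF.1 _
      · rw [Ideal.span_singleton_le_iff_mem, Ideal.mem_comap]
        simp
  have hmemJ : ∀ m, 0 < m → Polynomial.X - Polynomial.C (x ^ m) ∈ J := by
    intro m hm
    rw [← hJ m hm, Ideal.mem_comap]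
    simp
  rw [← regD_comap _ (hsurj (x ^ m)), hJ m hm, hcomap] at h
  rw [← regD_comap _ (hsurj (x ^ l)), hJ l hl, hcomap]
  exact regD_exchange J k T _ _ (hmemJ m hm) (hmemJ l hl) (hT m) (hT l) h

theorem shift_ideal_eq {K σ ι : Type*} [Field K] (A₀ : Ideal (MvPolynomial σ K)) (v : σ) (m : ℕ)
    (e : ι → (σ →₀ ℕ)) :
    A₀ ⊔ Ideal.span {(X v : MvPolynomial σ K) ^ m} *
      (A₀ ⊔ Ideal.span (Set.range fun i => monomial (e i) (1 : K))) =
    A₀ ⊔ Ideal.span (Set.range fun i => monomial (Finsupp.single v m + e i) (1 : K)) := by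
  rw [Ideal.mul_sup, ← sup_assoc, sup_eq_left.2 (Ideal.mul_le_right : Ideal.span {(X v : MvPolynomial σ K) ^ m} * A₀ ≤ A₀),
    Ideal.span_mul_span',
    Set.singleton_mul, ← Set.range_comp]
  congr 3
  funext i
  simp [X_pow_eq_monomial, monomial_mul]

theorem shift_hreg {K σ : Type*} [Field K] (S₀ S₁ : Set (σ →₀ ℕ)) (v : σ) (p : ℕ)
    (h₀ : ∀ u ∈ S₀, u v ≤ p) (h₁ : ∀ u ∈ S₁, p ≤ u v) (z : MvPolynomial σ K)
    (hz : z ∈ Ideal.span ((fun u => monomial u (1 : K)) '' (S₀ ∪ S₁)))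
    (hxz : X v * z ∈ Ideal.span ((fun u => monomial u (1 : K)) '' S₀)) :
    z ∈ Ideal.span ((fun u => monomial u (1 : K)) '' S₀) := by
  rw [mem_ideal_span_monomial_image] at *
  intro u hu
  obtain ⟨t, ht, htu⟩ := hz u hu
  rcases ht with ht | ht
  · exact ⟨t, ht, htu⟩
  · obtain ⟨r, hr, hru⟩ := hxz (Finsupp.single v 1 + u) (by
      rw [mem_support_iff, coeff_X_mul]
      exact mem_support_iff.1 hu)
    refine ⟨r, hr, fun i => ?_⟩
    by_cases hi : i = v
    · subst hi
      exact (h₀ r hr).trans ((h₁ t ht).trans (htu i))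
    · have := hru i
      simpa [Finsupp.single_apply, Ne.symm hi] using this

theorem monomial_mem_mIdeal (K : Type) [Field K] (n : ℕ) (u : Fin n →₀ ℕ) (hu : u ≠ 0) :
    monomial u (1 : K) ∈ mIdeal K n := by
  obtain ⟨i, hi⟩ := Finsupp.ne_iff.1 hu
  have h1 : Finsupp.single i 1 ≤ u := by
    rw [Finsupp.single_le_iff]
    exact Nat.one_le_iff_ne_zero.2 hi
  obtain ⟨t, rfl⟩ := exists_add_of_le h1
  have : monomial (Finsupp.single i 1 + t) (1 : K) = X i * monomial t 1 := by
    simp [X, monomial_mul]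
  rw [this]
  exact Ideal.mul_mem_right _ _ (Ideal.subset_span ⟨i, rfl⟩)

theorem mIdeal_ne_top (K : Type) [Field K] (n : ℕ) : mIdeal K n ≠ ⊤ := by
  intro h
  have : mIdeal K n ≤ RingHom.ker (constantCoeff (R := K) (σ := Fin n)) := by
    rw [mIdeal, Ideal.span_le]
    rintro _ ⟨i, rfl⟩
    simp [RingHom.mem_ker]
  rw [h, top_le_iff, Ideal.eq_top_iff_one] at this
  simp [RingHom.mem_ker] at this

theorem depthQuot_congr (K : Type) [Field K] (n : ℕ) (I I' : Ideal (MvPolynomial (Fin n) K))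
    (hI : I ≤ mIdeal K n) (hI' : I' ≤ mIdeal K n)
    (h : ∀ k, RegD (mIdeal K n) k I ↔ RegD (mIdeal K n) k I') :
    depthQuot K n I = depthQuot K n I' := by
  unfold depthQuot
  congr 1
  ext k
  rw [Set.mem_ofPred_eq, Set.mem_ofPred_eq, isRegular_iff_regD _ (mIdeal_ne_top K n) k I hI,
    isRegular_iff_regD _ (mIdeal_ne_top K n) k I' hI', h]

end ShiftAux

/-- **Signature invariants of monomial ideals** (Lemma: depth and dimension under the
shift operation).  In the gap setup, where the minimal generating set of the monomial
ideal `I ⊆ R = K[x_1,…,x_n]` (of height at least `2`) is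
`G(I) = ⋃_{j=0}^{p} {x_1^j x^{γ_{i,j}}} ∪ {x_1^{q_i} x^{ε_i}}` with `q_1 - p ≥ 2`, and
where the shift `I_sft` is the ideal generated by
`⋃_{j=0}^{p} {x_1^j x^{γ_{i,j}}} ∪ {x_1^{q_i - q_1 + p + 1} x^{ε_i}}`,
one has `depth(R/I) = depth(R/I_sft)` and `dim(R/I) = dim(R/I_sft)`. -/
theorem shift_depth_dim
    (K : Type) [Field K] (n : ℕ) (hn : 0 < n)
    (p s : ℕ) (hs : 0 < s)
    (qe : Fin s → ℕ) (hmono : Monotone qe) (hq : p + 2 ≤ qe ⟨0, hs⟩)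
    (k : Fin (p + 1) → ℕ) (hk : ∀ j, 0 < k j)
    (γ : (j : Fin (p + 1)) → Fin (k j) → (Fin n →₀ ℕ)) (hγ : ∀ j i, γ j i ⟨0, hn⟩ = 0)
    (ε : Fin s → (Fin n →₀ ℕ)) (hε : ∀ i, ε i ⟨0, hn⟩ = 0)
    (w : ((Σ j : Fin (p + 1), Fin (k j)) ⊕ Fin s) → (Fin n →₀ ℕ))
    (hw : w = Sum.elim
      (fun ji : Σ j : Fin (p + 1), Fin (k j) =>
        Finsupp.single ⟨0, hn⟩ (ji.1 : ℕ) + γ ji.1 ji.2)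
      (fun i : Fin s => Finsupp.single ⟨0, hn⟩ (qe i) + ε i))
    (hch : ∀ a b, w a ≤ w b → a = b)
    (I : Ideal (MvPolynomial (Fin n) K))
    (hI : I = Ideal.span (Set.range fun t => monomial (w t) (1 : K)))
    (hht : (2 : ℕ∞) ≤ heightOf I)
    (Isft : Ideal (MvPolynomial (Fin n) K))
    (hIsft : Isft = Ideal.span
      ((Set.range fun ji : Σ j : Fin (p + 1), Fin (k j) =>
          monomial (w (Sum.inl ji)) (1 : K)) ∪
       (Set.range fun i : Fin s =>
          monomial (Finsupp.single ⟨0, hn⟩ (qe i - qe ⟨0, hs⟩ + p + 1) + ε i) (1 : K)))) :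
    depthQuot K n I = depthQuot K n Isft ∧
      ringKrullDim (MvPolynomial (Fin n) K ⧸ I) =
        ringKrullDim (MvPolynomial (Fin n) K ⧸ Isft) := by
  classical
  set v : Fin n := ⟨0, hn⟩ with hv
  set q₀ := qe ⟨0, hs⟩ with hq₀
  have hqi : ∀ i, q₀ ≤ qe i := fun i => hmono (Fin.mk_le_of_le_val (Nat.zero_le _))
  set S₀ : Set (Fin n →₀ ℕ) := Set.range fun ji => w (Sum.inl ji) with hS₀
  set e : Fin s → (Fin n →₀ ℕ) := fun i => Finsupp.single v (qe i - q₀ + p) + ε i with he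
  set A₀ : Ideal (MvPolynomial (Fin n) K) :=
    Ideal.span ((fun u => monomial u (1 : K)) '' S₀) with hA₀
  set A₁ : Ideal (MvPolynomial (Fin n) K) :=
    A₀ ⊔ Ideal.span (Set.range fun i => monomial (e i) (1 : K)) with hA₁
  have hA₀' : A₀ = Ideal.span (Set.range fun ji : Σ j : Fin (p + 1), Fin (k j) =>
      monomial (w (Sum.inl ji)) (1 : K)) := by
    rw [hA₀, hS₀, ← Set.range_comp]; rfl
  have hwr : ∀ i, w (Sum.inr i) = Finsupp.single v (q₀ - p) + e i := by
    intro i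
    rw [hw, he]
    simp only [Sum.elim_inr]
    rw [← add_assoc, ← Finsupp.single_add]
    congr 2
    have := hqi i
    omega
  have hI1 : I = A₀ ⊔ Ideal.span {(X v : MvPolynomial (Fin n) K) ^ (q₀ - p)} * A₁ := by
    rw [hA₁, shift_ideal_eq, hI, hA₀', ← Ideal.span_union, ← Set.Sum.elim_range]
    congr 2
    funext t
    rcases t with t | t
    · rfl
    · simp only [Sum.elim_inr, hwr]
  have hI2 : Isft = A₀ ⊔ Ideal.span {(X v : MvPolynomial (Fin n) K) ^ 1} * A₁ := by
    rw [hA₁, shift_ideal_eq, hIsft, hA₀', ← Ideal.span_union]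
    congr 3
    funext i
    simp only [he]
    rw [← add_assoc, ← Finsupp.single_add]
    rw [show qe i - q₀ + p + 1 = 1 + (qe i - q₀ + p) by omega]
  have hXv : (X v : MvPolynomial (Fin n) K) ∈ mIdeal K n := Ideal.subset_span ⟨v, rfl⟩
  have hA₁' : A₁ = Ideal.span ((fun u => monomial u (1 : K)) '' (S₀ ∪ Set.range e)) := by
    rw [Set.image_union, Ideal.span_union, ← Set.range_comp _ e]; rfl
  have hreg : ∀ z ∈ A₁, X v * z ∈ A₀ → z ∈ A₀ := by
    intro z hz hxz
    rw [hA₁'] at hz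
    refine shift_hreg S₀ (Set.range e) v p ?_ ?_ z hz hxz
    · rintro _ ⟨ji, rfl⟩
      have h1 := ji.1.isLt
      simp only [hw, Sum.elim_inl, Finsupp.add_apply, Finsupp.single_eq_same, hγ]
      omega
    · rintro _ ⟨i, rfl⟩
      simp only [he, Finsupp.add_apply, Finsupp.single_eq_same]
      omega
  have hA₀m : A₀ ≤ mIdeal K n := by
    rw [hA₀', Ideal.span_le]
    rintro _ ⟨ji, rfl⟩
    refine monomial_mem_mIdeal K n _ fun h0 => ?_
    have := hch (Sum.inl ji) (Sum.inr ⟨0, hs⟩) (by rw [h0]; exact zero_le)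
    simp at this
  have hm : ∀ m, 0 < m → A₀ ⊔ Ideal.span {(X v : MvPolynomial (Fin n) K) ^ m} * A₁
      ≤ mIdeal K n := by
    intro m hm
    refine sup_le hA₀m (Ideal.mul_le_left.trans ?_)
    rw [Ideal.span_singleton_le_iff_mem]
    exact Ideal.pow_mem_of_mem _ hXv m hm
  refine ⟨?_, ?_⟩
  · apply depthQuot_congr
    · rw [hI1]; exact hm _ (by omega)
    · rw [hI2]; exact hm _ (by omega)
    · intro d
      rw [hI1, hI2]
      exact ⟨regD_stretch _ A₀ A₁ le_sup_left _ hXv hreg d _ _ (by omega) (by omega),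
        regD_stretch _ A₀ A₁ le_sup_left _ hXv hreg d _ _ (by omega) (by omega)⟩
  · have hle : I ≤ Isft := by
      rw [hI1, hI2]
      refine sup_le_sup_left (Ideal.mul_mono_left ?_) _
      rw [Ideal.span_singleton_le_span_singleton]
      exact pow_dvd_pow _ (by omega)
    have hpow : Isft ≤ I.radical := by
      rw [hI2]
      refine sup_le ((le_sup_left.trans hI1.ge).trans Ideal.le_radical) ?_
      intro z hz
      obtain ⟨a, ha, rfl⟩ := Ideal.mem_span_singleton_mul.1 hz
      refine ⟨q₀ - p, ?_⟩
      rw [hI1, pow_one, mul_pow]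
      refine Ideal.mem_sup_right (Ideal.mul_mem_mul (Ideal.mem_span_singleton_self _) ?_)
      exact Ideal.pow_mem_of_mem _ ha _ (by omega)
    have hrad : I.radical = Isft.radical :=
      le_antisymm (Ideal.radical_mono hle) (Ideal.radical_le_radical_iff.2 hpow)
    rw [ringKrullDim_quotient, ringKrullDim_quotient, ← PrimeSpectrum.zeroLocus_radical I, hrad,
      PrimeSpectrum.zeroLocus_radical]
end

section
/- In the gap setup with p = 0, one has the colon ideal identity (I : x_1^{q_1 − 1}) = I_sft, where (I : g) = {h ∈ R : h·g ∈ I}. -/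
open MvPolynomial

/-- **Signature invariants of monomial ideals** (Lemma: colon description of the shift
when `p = 0`).  In the gap setup with `p = 0`, where the minimal generating set of the
monomial ideal `I ⊆ R = K[x_1,…,x_n]` (of height at least `2`) is
`G(I) = {x^{γ_1},…,x^{γ_{k_0}}} ∪ {x_1^{q_1} x^{ε_1},…,x_1^{q_s} x^{ε_s}}` with
`q_1 ≥ 2` and no generator in the first family divisible by `x_1`, and where the shift
`I_sft` is generated by `{x^{γ_i}} ∪ {x_1^{q_i - q_1 + 1} x^{ε_i}}`, one has
`(I : x_1^{q_1 - 1}) = I_sft`. -/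
theorem colon_eq_shift
    (K : Type) [Field K] (n : ℕ) (hn : 0 < n)
    (s : ℕ) (hs : 0 < s)
    (qe : Fin s → ℕ) (hmono : Monotone qe) (hq : 2 ≤ qe ⟨0, hs⟩)
    (k₀ : ℕ) (hk : 0 < k₀)
    (γ : Fin k₀ → (Fin n →₀ ℕ)) (hγ : ∀ i, γ i ⟨0, hn⟩ = 0)
    (ε : Fin s → (Fin n →₀ ℕ)) (hε : ∀ i, ε i ⟨0, hn⟩ = 0)
    (w : (Fin k₀ ⊕ Fin s) → (Fin n →₀ ℕ))
    (hw : w = Sum.elim γ (fun i : Fin s => Finsupp.single ⟨0, hn⟩ (qe i) + ε i))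
    (hch : ∀ a b, w a ≤ w b → a = b)
    (I : Ideal (MvPolynomial (Fin n) K))
    (hI : I = Ideal.span (Set.range fun t => monomial (w t) (1 : K)))
    (hht : (2 : ℕ∞) ≤ heightOf I)
    (Isft : Ideal (MvPolynomial (Fin n) K))
    (hIsft : Isft = Ideal.span
      ((Set.range fun i : Fin k₀ => monomial (γ i) (1 : K)) ∪
       (Set.range fun i : Fin s =>
          monomial (Finsupp.single ⟨0, hn⟩ (qe i - qe ⟨0, hs⟩ + 1) + ε i) (1 : K)))) :
    Submodule.colon I (Ideal.span
        {(X ⟨0, hn⟩ : MvPolynomial (Fin n) K) ^ (qe ⟨0, hs⟩ - 1)}) = Isft := by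
  have hR1 : (Set.range fun t => monomial (w t) (1 : K))
      = (fun a => monomial a (1 : K)) '' Set.range w := by
    rw [← Set.range_comp]; rfl
  have hR2 : ((Set.range fun i : Fin k₀ => monomial (γ i) (1 : K)) ∪
       (Set.range fun i : Fin s =>
          monomial (Finsupp.single ⟨0, hn⟩ (qe i - qe ⟨0, hs⟩ + 1) + ε i) (1 : K)))
      = (fun a => monomial a (1 : K)) '' (Set.range γ ∪ Set.range fun i : Fin s =>
          Finsupp.single ⟨0, hn⟩ (qe i - qe ⟨0, hs⟩ + 1) + ε i) := by
    rw [Set.image_union, ← Set.range_comp, ← Set.range_comp]; rfl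
  have hq0 : ∀ i, qe ⟨0, hs⟩ ≤ qe i := fun i => hmono (Fin.mk_le_of_le_val (Nat.zero_le _))
  ext f
  rw [Ideal.mem_colon_span_singleton, hIsft, hR2, mem_ideal_span_monomial_image, hI, hR1,
    mem_ideal_span_monomial_image]
  have key : ∀ m : Fin n →₀ ℕ,
      (∃ a ∈ Set.range w, a ≤ m + Finsupp.single ⟨0, hn⟩ (qe ⟨0, hs⟩ - 1)) ↔
      (∃ a ∈ Set.range γ ∪ Set.range fun i : Fin s =>
          Finsupp.single ⟨0, hn⟩ (qe i - qe ⟨0, hs⟩ + 1) + ε i, a ≤ m) := by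
    intro m
    have h1 : ∀ i, γ i ≤ m + Finsupp.single ⟨0, hn⟩ (qe ⟨0, hs⟩ - 1) ↔ γ i ≤ m := by
      intro i
      simp only [Finsupp.le_def]
      refine forall_congr' fun j => ?_
      by_cases hj : j = ⟨0, hn⟩
      · subst hj; simp [hγ]
      · simp [Finsupp.single_apply, Ne.symm hj]
    have h2 : ∀ i, Finsupp.single ⟨0, hn⟩ (qe i) + ε i
          ≤ m + Finsupp.single ⟨0, hn⟩ (qe ⟨0, hs⟩ - 1) ↔
        Finsupp.single ⟨0, hn⟩ (qe i - qe ⟨0, hs⟩ + 1) + ε i ≤ m := by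
      intro i
      simp only [Finsupp.le_def]
      refine forall_congr' fun j => ?_
      by_cases hj : j = ⟨0, hn⟩
      · subst hj
        have := hq0 i
        simp only [Finsupp.add_apply, Finsupp.single_eq_same, hε]
        omega
      · simp [Finsupp.single_apply, Ne.symm hj]
    subst hw
    simp only [Set.mem_union, or_and_right, exists_or, Set.exists_range_iff, Sum.exists,
      Sum.elim_inl, Sum.elim_inr, h1, h2]
  rw [X_pow_eq_monomial]
  constructor
  · intro h m hm
    refine (key m).1 (h _ ?_)
    rw [mem_support_iff] at hm ⊢
    rwa [coeff_mul_monomial, mul_one]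
  · intro h m hm
    rw [mem_support_iff, coeff_mul_monomial'] at hm
    split_ifs at hm with hle
    · have := (key _).2 (h (m - Finsupp.single ⟨0, hn⟩ (qe ⟨0, hs⟩ - 1))
        (by rw [mem_support_iff]; simpa using hm))
      rwa [tsub_add_cancel_of_le hle] at this
    · exact absurd rfl hm
end
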